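/- arXiv:2401.11912 — 8 statements merged into one kernel-verified Lean document; each statement's English description precedes it below -/
import Mathlib

section
/- For every n ≥ 1 and every k with 1 ≤ k ≤ n, Black's single-peaked domain B_n on {1,…,n} is exactly (k, 2^{k-1})-abundant: the restriction of B_n to every k-element subset of {1,…,n} contains at least 2^{k-1} distinct linear orders, and there is some k-element subset whose restriction contains exactly 2^{k-1} distinct linear orders. -/
/-- `r` is a strict total order on `X`, supported on `X` (i.e. `r` never relates
elements outside `X`). -/
def IsLinearOrderOn {α : Type*} (X : Set α) (r : α → α → Prop) : Prop :=
  (∀ a b, r a b → a ∈ X ∧ b ∈ X) ∧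
  (∀ a ∈ X, ¬ r a a) ∧
  (∀ a ∈ X, ∀ b ∈ X, ∀ c ∈ X, r a b → r b c → r a c) ∧
  (∀ a ∈ X, ∀ b ∈ X, a ≠ b → r a b ∨ r b a)

/-- A domain on `X` is a set of linear orders on `X`. -/
def IsDomainOn {α : Type*} (X : Set α) (D : Set (α → α → Prop)) : Prop :=
  ∀ r ∈ D, IsLinearOrderOn X r

/-- The restriction of the order `r` to the subset `A`. -/
def restrictRel {α : Type*} (A : Set α) (r : α → α → Prop) : α → α → Prop :=
  fun a b => a ∈ A ∧ b ∈ A ∧ r a b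

/-- The restriction of the domain `D` to the subset `A`: the set of linear orders
on `A` induced by the orders in `D`. -/
def restrictDom {α : Type*} (A : Set α) (D : Set (α → α → Prop)) :
    Set (α → α → Prop) :=
  restrictRel A '' D

/-- `D` is `(k,s)`-abundant on `X`: its restriction to every `k`-element subset of `X`
contains at least `s` distinct linear orders. -/
def IsAbundant {α : Type*} (X : Set α) (D : Set (α → α → Prop)) (k s : ℕ) : Prop :=
  ∀ A : Set α, A ⊆ X → A.ncard = k → s ≤ (restrictDom A D).ncard

/-- `D` is exactly `(k,s)`-abundant: `(k,s)`-abundant but not `(k,s+1)`-abundant. -/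
def IsExactlyAbundant {α : Type*} (X : Set α) (D : Set (α → α → Prop)) (k s : ℕ) : Prop :=
  IsAbundant X D k s ∧ ¬ IsAbundant X D k (s + 1)

/-- Black's single-peaked domain on `{1,…,n}`: all linear orders on `{1,…,n}` that are
single-peaked with respect to the natural axis, i.e. for `a < b < c` the order never
ranks `b` below both `a` and `c`. -/
def blackSinglePeaked (n : ℕ) : Set (ℕ → ℕ → Prop) :=
  { r | IsLinearOrderOn (Set.Icc 1 n) r ∧
      ∀ a b c : ℕ, a ∈ Set.Icc 1 n → b ∈ Set.Icc 1 n → c ∈ Set.Icc 1 n →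
        a < b → b < c → ¬ (r a b ∧ r c b) }

/-- single-peaked orders on a set of naturals -/
def SPk (X : Set ℕ) : Set (ℕ → ℕ → Prop) :=
  { r | IsLinearOrderOn X r ∧
      ∀ a b c : ℕ, a ∈ X → b ∈ X → c ∈ X → a < b → b < c → ¬ (r a b ∧ r c b) }

theorem spk_restrict {A X : Set ℕ} (h : A ⊆ X) {r : ℕ → ℕ → Prop} (hr : r ∈ SPk X) :
    restrictRel A r ∈ SPk A := by
  obtain ⟨⟨h1, h2, h3, h4⟩, h5⟩ := hr
  refine ⟨⟨fun a b hab => ⟨hab.1, hab.2.1⟩, fun a ha hh => h2 a (h ha) hh.2.2, ?_, ?_⟩, ?_⟩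
  · intro a ha b hb c hc hab hbc
    exact ⟨ha, hc, h3 a (h ha) b (h hb) c (h hc) hab.2.2 hbc.2.2⟩
  · intro a ha b hb hab
    rcases h4 a (h ha) b (h hb) hab with h' | h'
    · exact Or.inl ⟨ha, hb, h'⟩
    · exact Or.inr ⟨hb, ha, h'⟩
  · intro a b c ha hb hc hab hbc hh
    exact h5 a b c (h ha) (h hb) (h hc) hab hbc ⟨hh.1.2.2, hh.2.2.2⟩

/-- the inserted element `x` beats `b` -/
def insBeats (A : Set ℕ) (x : ℕ) (s : ℕ → ℕ → Prop) (b : ℕ) : Prop :=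
  b ∈ A ∧ (∃ a, a ∈ A ∧ a < x ∧ (a = b ∨ s a b)) ∧ (∃ c, c ∈ A ∧ x < c ∧ (c = b ∨ s c b))

theorem spk_insert {A : Set ℕ} {x : ℕ} (hx : x ∉ A) {s : ℕ → ℕ → Prop} (hs : s ∈ SPk A) :
    ∃ r ∈ SPk (insert x A), restrictRel A r = s := by
  obtain ⟨⟨h1, h2, h3, h4⟩, h5⟩ := hs
  have hd : ∀ b c, insBeats A x s b → s b c → insBeats A x s c := by
    rintro b c ⟨hb, ⟨a, ha, hax, hab⟩, ⟨d, hd, hdx, hdb⟩⟩ hbc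
    have hc := (h1 _ _ hbc).2
    refine ⟨hc, ⟨a, ha, hax, Or.inr ?_⟩, ⟨d, hd, hdx, Or.inr ?_⟩⟩
    · rcases hab with rfl | hab
      · exact hbc
      · exact h3 a ha b hb c hc hab hbc
    · rcases hdb with rfl | hdb
      · exact hbc
      · exact h3 d hd b hb c hc hdb hbc
  have hmid : ∀ a c, a ∈ A → c ∈ A → a < x → x < c → insBeats A x s a ∨ insBeats A x s c := by
    intro a c ha hc hax hxc
    rcases h4 a ha c hc (by omega) with h | h
    · exact Or.inr ⟨hc, ⟨a, ha, hax, Or.inr h⟩, ⟨c, hc, hxc, Or.inl rfl⟩⟩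
    · exact Or.inl ⟨ha, ⟨a, ha, hax, Or.inl rfl⟩, ⟨c, hc, hxc, Or.inr h⟩⟩
  have hl : ∀ b c, insBeats A x s b → c ∈ A → x < b → b < c → ¬ s c b := by
    rintro b c ⟨hb, ⟨a, ha, hax, hab⟩, -⟩ hc hxb hbc h
    rcases hab with rfl | hab
    · omega
    · exact h5 a b c ha hb hc (by omega) hbc ⟨hab, h⟩
  have hr : ∀ b c, insBeats A x s b → c ∈ A → b < x → c < b → ¬ s c b := by
    rintro b c ⟨hb, -, ⟨a, ha, hax, hab⟩⟩ hc hxb hbc h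
    rcases hab with rfl | hab
    · omega
    · exact h5 c b a hc hb ha hbc (by omega) ⟨h, hab⟩
  have hA : ∀ b, insBeats A x s b → b ∈ A := fun b h => h.1
  generalize insBeats A x s = B at *
  refine ⟨fun a b => s a b ∨ (a = x ∧ B b) ∨ (b = x ∧ a ∈ A ∧ ¬ B a), ⟨⟨?_, ?_, ?_, ?_⟩, ?_⟩, ?_⟩
  · intro a b h
    simp only [Set.mem_insert_iff]
    grind
  · intro a ha
    simp only [Set.mem_insert_iff] at ha
    grind
  · intro a ha b hb c hc
    simp only [Set.mem_insert_iff] at ha hb hc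
    grind
  · intro a ha b hb hab
    simp only [Set.mem_insert_iff] at ha hb
    grind
  · intro a b c ha hb hc hab hbc
    simp only [Set.mem_insert_iff] at ha hb hc
    rcases ha with rfl | ha <;> rcases hb with rfl | hb <;> rcases hc with rfl | hc <;> grind
  · funext a b
    apply propext
    simp only [restrictRel]
    grind

theorem spk_extend (A C : Finset ℕ) (s : ℕ → ℕ → Prop) (hs : s ∈ SPk (A : Set ℕ)) :
    ∃ r ∈ SPk ((C ∪ A : Finset ℕ) : Set ℕ), restrictRel (A : Set ℕ) r = s := by
  induction C using Finset.induction_on with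
  | empty =>
    refine ⟨s, by simpa using hs, ?_⟩
    funext a b
    apply propext
    exact ⟨fun h => h.2.2, fun h => ⟨(hs.1.1 a b h).1, (hs.1.1 a b h).2, h⟩⟩
  | insert x C hx ih =>
    obtain ⟨r, hr, hrs⟩ := ih
    by_cases hxm : x ∈ C ∪ A
    · refine ⟨r, ?_, hrs⟩
      rwa [Finset.insert_union, Finset.insert_eq_of_mem hxm]
    · obtain ⟨t, ht, htr⟩ := spk_insert (by exact_mod_cast hxm) hr
      refine ⟨t, ?_, ?_⟩
      · rwa [Finset.insert_union, Finset.coe_insert]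
      · rw [← hrs, ← htr]
        funext a b
        apply propext
        simp only [restrictRel, Finset.coe_union, Set.mem_union]
        tauto

theorem spk_restrictDom (A X : Finset ℕ) (h : A ⊆ X) :
    restrictDom (A : Set ℕ) (SPk (X : Set ℕ)) = SPk (A : Set ℕ) := by
  apply Set.Subset.antisymm
  · rintro _ ⟨r, hr, rfl⟩
    exact spk_restrict (by exact_mod_cast h) hr
  · intro s hs
    obtain ⟨r, hr, hrs⟩ := spk_extend A X s hs
    rw [Finset.union_eq_left.2 h] at hr
    exact ⟨r, hr, hrs⟩

/-- put `m` at the bottom -/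
def addBot (Y : Set ℕ) (m : ℕ) (s : ℕ → ℕ → Prop) : ℕ → ℕ → Prop :=
  fun a b => s a b ∨ (a ∈ Y ∧ b = m)

theorem addBot_injOn (Y : Set ℕ) (m : ℕ) (hm : m ∉ Y) : Set.InjOn (addBot Y m) (SPk Y) := by
  intro s hs t ht hst
  funext a b
  apply propext
  have h := congrFun (congrFun hst a) b
  simp only [addBot, eq_iff_iff] at h
  have h1 := hs.1.1 a b
  have h2 := ht.1.1 a b
  grind

theorem addBot_mem (Y : Set ℕ) (m : ℕ) (hm : m ∉ Y) (he : (∀ y ∈ Y, y < m) ∨ (∀ y ∈ Y, m < y))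
    (s : ℕ → ℕ → Prop) (hs : s ∈ SPk Y) : addBot Y m s ∈ SPk (insert m Y) := by
  obtain ⟨⟨h1, h2, h3, h4⟩, h5⟩ := hs
  refine ⟨⟨?_, ?_, ?_, ?_⟩, ?_⟩
  · intro a b
    simp only [Set.mem_insert_iff, addBot]
    grind
  · intro a ha
    simp only [Set.mem_insert_iff, addBot] at *
    grind
  · intro a ha b hb c hc
    simp only [Set.mem_insert_iff, addBot] at *
    grind
  · intro a ha b hb hab
    simp only [Set.mem_insert_iff, addBot] at *
    grind
  · intro a b c ha hb hc hab hbc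
    simp only [Set.mem_insert_iff, addBot] at *
    rcases he with he | he <;>
    rcases ha with rfl | ha <;> rcases hb with rfl | hb <;> rcases hc with rfl | hc <;> grind

theorem addBot_of_bot (Y : Set ℕ) (m : ℕ) (hm : m ∉ Y) (r : ℕ → ℕ → Prop)
    (hr : r ∈ SPk (insert m Y)) (hb : ∀ y ∈ Y, r y m) : r ∈ addBot Y m '' SPk Y := by
  refine ⟨restrictRel Y r, spk_restrict (Set.subset_insert _ _) hr, ?_⟩
  obtain ⟨⟨h1, h2, h3, h4⟩, h5⟩ := hr
  funext a b
  apply propext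
  have g1 := h1 a b
  have g2 := h2 m (Set.mem_insert _ _)
  have g3 := h3 m (Set.mem_insert _ _) b
  simp only [Set.mem_insert_iff, addBot, restrictRel] at *
  grind

theorem spk_count (k : ℕ) : ∀ X : Finset ℕ, X.card = k + 1 →
    (SPk (X : Set ℕ)).Finite ∧ (SPk (X : Set ℕ)).ncard = 2 ^ k := by
  induction k with
  | zero =>
    intro X hX
    obtain ⟨x, rfl⟩ := Finset.card_eq_one.1 (by simpa using hX)
    have : SPk (({x} : Finset ℕ) : Set ℕ) = {fun _ _ => False} := by
      ext r
      simp only [Set.mem_singleton_iff]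
      constructor
      · rintro ⟨⟨h1, h2, -, -⟩, -⟩
        funext a b
        simp only [eq_iff_iff, iff_false]
        intro h
        have := h1 a b h
        simp only [Finset.coe_singleton, Set.mem_singleton_iff] at *
        grind
      · rintro rfl
        simp [SPk, IsLinearOrderOn]
    rw [this]
    simp
  | succ k ih =>
    intro X hX
    have hne : X.Nonempty := Finset.card_pos.1 (by omega)
    obtain ⟨lo, hlo, hlo'⟩ : ∃ lo ∈ X, ∀ y ∈ X, lo ≤ y := ⟨X.min' hne, X.min'_mem hne, fun y hy => X.min'_le y hy⟩
    obtain ⟨hi, hhi, hhi'⟩ : ∃ hi ∈ X, ∀ y ∈ X, y ≤ hi := ⟨X.max' hne, X.max'_mem hne, fun y hy => X.le_max' y hy⟩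
    have hlh : lo ≠ hi := by
      rintro rfl
      have : X ⊆ {lo} := by
        intro y hy
        have := hlo' y hy
        have := hhi' y hy
        simp; omega
      have := Finset.card_le_card this
      simp at this
      omega
    obtain ⟨f1, c1⟩ := ih (X.erase lo) (by rw [Finset.card_erase_of_mem hlo]; omega)
    obtain ⟨f2, c2⟩ := ih (X.erase hi) (by rw [Finset.card_erase_of_mem hhi]; omega)
    have m1 : lo ∉ ((X.erase lo : Finset ℕ) : Set ℕ) := by simp
    have m2 : hi ∉ ((X.erase hi : Finset ℕ) : Set ℕ) := by simp
    have e1 : insert lo ((X.erase lo : Finset ℕ) : Set ℕ) = X := by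
      rw [← Finset.coe_insert, Finset.insert_erase hlo]
    have e2 : insert hi ((X.erase hi : Finset ℕ) : Set ℕ) = X := by
      rw [← Finset.coe_insert, Finset.insert_erase hhi]
    have key : SPk (X : Set ℕ) =
        addBot ((X.erase lo : Finset ℕ) : Set ℕ) lo '' SPk ((X.erase lo : Finset ℕ) : Set ℕ) ∪
        addBot ((X.erase hi : Finset ℕ) : Set ℕ) hi '' SPk ((X.erase hi : Finset ℕ) : Set ℕ) := by
      apply Set.Subset.antisymm
      · intro r hr
        obtain ⟨⟨h1, h2, h3, h4⟩, h5⟩ := id hr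
        simp only [Finset.mem_coe] at h1 h2 h3 h4 h5
        rcases h4 lo hlo hi hhi hlh with h | h
        · right
          apply addBot_of_bot _ _ m2
          · rwa [e2]
          · intro y hy
            simp only [Finset.coe_erase, Set.mem_diff, Finset.mem_coe, Set.mem_singleton_iff] at hy
            have := hlo' y hy.1
            have := hhi' y hy.1
            have := h5 lo y hi hlo hy.1 hhi
            have := h3 lo hlo hi hhi y hy.1
            have := h4 y hy.1 hi hhi
            grind
        · left
          apply addBot_of_bot _ _ m1
          · rwa [e1]
          · intro y hy
            simp only [Finset.coe_erase, Set.mem_diff, Finset.mem_coe, Set.mem_singleton_iff] at hy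
            have := hlo' y hy.1
            have := hhi' y hy.1
            have := h5 lo y hi hlo hy.1 hhi
            have := h3 hi hhi lo hlo y hy.1
            have := h4 y hy.1 lo hlo
            grind
      · rintro r (⟨s, hs, rfl⟩ | ⟨s, hs, rfl⟩)
        · rw [← e1]
          refine addBot_mem _ _ m1 (Or.inr ?_) s hs
          intro y hy
          simp only [Finset.coe_erase, Set.mem_diff, Finset.mem_coe, Set.mem_singleton_iff] at hy
          have := hlo' y hy.1
          have := hy.2
          omega
        · rw [← e2]
          refine addBot_mem _ _ m2 (Or.inl ?_) s hs
          intro y hy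
          simp only [Finset.coe_erase, Set.mem_diff, Finset.mem_coe, Set.mem_singleton_iff] at hy
          have := hhi' y hy.1
          have := hy.2
          omega
    have hdis : Disjoint
        (addBot ((X.erase lo : Finset ℕ) : Set ℕ) lo '' SPk ((X.erase lo : Finset ℕ) : Set ℕ))
        (addBot ((X.erase hi : Finset ℕ) : Set ℕ) hi '' SPk ((X.erase hi : Finset ℕ) : Set ℕ)) := by
      rw [Set.disjoint_left]
      rintro _ ⟨s, hs, rfl⟩ ⟨t, ht, hst⟩
      have h := congrFun (congrFun hst hi) lo
      have hh : addBot ((X.erase lo : Finset ℕ) : Set ℕ) lo s hi lo :=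
        Or.inr ⟨by simp [hhi, hlh.symm], rfl⟩
      rw [← h] at hh
      rcases hh with hh | hh
      · exact m2 (ht.1.1 _ _ hh).1
      · exact hlh hh.2
    rw [key]
    refine ⟨(f1.image _).union (f2.image _), ?_⟩
    rw [Set.ncard_union_eq hdis (f1.image _) (f2.image _),
      Set.ncard_image_of_injOn (addBot_injOn _ _ m1),
      Set.ncard_image_of_injOn (addBot_injOn _ _ m2), c1, c2]
    ring

theorem spk_restrict_ncard (n k : ℕ) (hk1 : 1 ≤ k) (A : Set ℕ) (hA : A ⊆ Set.Icc 1 n)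
    (hc : A.ncard = k) : (restrictDom A (blackSinglePeaked n)).ncard = 2 ^ (k - 1) := by
  have hf : A.Finite := (Set.finite_Icc 1 n).subset hA
  lift A to Finset ℕ using hf
  have hB : blackSinglePeaked n = SPk ((Finset.Icc 1 n : Finset ℕ) : Set ℕ) := by
    rw [Finset.coe_Icc]; rfl
  rw [Set.ncard_coe_finset] at hc
  rw [hB, spk_restrictDom A _ (by rw [← Finset.coe_subset, Finset.coe_Icc]; exact hA)]
  exact (spk_count (k - 1) A (by omega)).2

/-- For every `n ≥ 1` and `1 ≤ k ≤ n`, Black's single-peaked domain on `{1,…,n}` is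
exactly `(k, 2^(k-1))`-abundant. -/
theorem black_single_peaked_exactly_abundant (n k : ℕ) (hn : 1 ≤ n)
    (hk1 : 1 ≤ k) (hkn : k ≤ n) :
    IsExactlyAbundant (Set.Icc 1 n) (blackSinglePeaked n) k (2 ^ (k - 1)) := by
  refine ⟨fun A hA hc => (spk_restrict_ncard n k hk1 A hA hc).ge, fun h => ?_⟩
  have hs : Set.Icc 1 k ⊆ Set.Icc 1 n := Set.Icc_subset_Icc_right hkn
  have hc : (Set.Icc 1 k).ncard = k := by
    rw [← Finset.coe_Icc, Set.ncard_coe_finset]; simp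
  have h1 := h _ hs hc
  rw [spk_restrict_ncard n k hk1 _ hs hc] at h1
  omega
end

section
/- For every n ≥ 1, every maximal Arrow's single-peaked domain D on an n-element set X is exactly (k, 2^{k-1})-abundant for every k with 1 ≤ k ≤ n; in particular (taking k = n), D contains exactly 2^{n-1} linear orders. -/
/-- `D` is an Arrow's single-peaked domain on `X`: for every 3-element subset `T` of `X`
there is an `x ∈ T` that no order of `D` ranks last among the elements of `T`. -/
def IsArrowSinglePeaked {α : Type*} (X : Set α) (D : Set (α → α → Prop)) : Prop :=
  IsDomainOn X D ∧
  ∀ T : Set α, T ⊆ X → T.ncard = 3 →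
    ∃ x ∈ T, ∀ r ∈ D, ¬ (∀ y ∈ T, y ≠ x → r y x)

/-- A maximal Arrow's single-peaked domain on `X`. -/
def IsMaximalArrowSinglePeaked {α : Type*} (X : Set α) (D : Set (α → α → Prop)) : Prop :=
  IsArrowSinglePeaked X D ∧
  ∀ D' : Set (α → α → Prop), D ⊆ D' → IsArrowSinglePeaked X D' → D' = D

namespace ASP

variable {α : Type*}

lemma exists_bot {X : Set α} {r : α → α → Prop} (hr : IsLinearOrderOn X r) {S : Set α}
    (hS : S.Finite) (hne : S.Nonempty) (hSX : S ⊆ X) : ∃ a ∈ S, ∀ b ∈ S, b ≠ a → r b a := by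
  induction S, hS using Set.Finite.induction_on with
  | empty => simp at hne
  | @insert x S hx hS ih =>
    obtain ⟨h1, h2, h3, h4⟩ := hr
    have hxX : x ∈ X := hSX (Set.mem_insert _ _)
    have hSX' : S ⊆ X := fun y hy => hSX (Set.mem_insert_of_mem _ hy)
    by_cases hSe : S.Nonempty
    · obtain ⟨a, ha, hab⟩ := ih hSe hSX'
      have hax : a ≠ x := fun h => hx (h ▸ ha)
      rcases h4 a (hSX' ha) x hxX hax with h | h
      · refine ⟨x, Set.mem_insert _ _, fun b hb hbx => ?_⟩
        rcases hb with hb | hb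
        · exact absurd hb hbx
        · by_cases hba : b = a
          · exact hba ▸ h
          · exact h3 b (hSX' hb) a (hSX' ha) x hxX (hab b hb hba) h
      · refine ⟨a, Set.mem_insert_of_mem _ ha, fun b hb hba => ?_⟩
        rcases hb with hb | hb
        · exact hb ▸ h
        · exact hab b hb hba
    · refine ⟨x, Set.mem_insert _ _, fun b hb hbx => ?_⟩
      rcases hb with hb | hb
      · exact absurd hb hbx
      · exact absurd ⟨b, hb⟩ hSe

lemma irr {X : Set α} {r : α → α → Prop} (hr : IsLinearOrderOn X r) {a : α} : ¬ r a a :=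
  fun h => hr.2.1 a (hr.1 a a h).1 h

lemma asymm' {X : Set α} {r : α → α → Prop} (hr : IsLinearOrderOn X r) {a b : α}
    (h : r a b) (h' : r b a) : False :=
  irr hr (hr.2.2.1 a (hr.1 a b h).1 b (hr.1 a b h).2 a (hr.1 a b h).1 h h')

lemma restrict_lin {X A : Set α} {r : α → α → Prop} (hr : IsLinearOrderOn X r) (hA : A ⊆ X) :
    IsLinearOrderOn A (restrictRel A r) := by
  refine ⟨fun a b h => ⟨h.1, h.2.1⟩, fun a ha h => irr hr h.2.2, ?_, ?_⟩
  · intro a ha b hb c hc h h'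
    exact ⟨ha, hc, hr.2.2.1 a (hA ha) b (hA hb) c (hA hc) h.2.2 h'.2.2⟩
  · intro a ha b hb hab
    rcases hr.2.2.2 a (hA ha) b (hA hb) hab with h | h
    · exact Or.inl ⟨ha, hb, h⟩
    · exact Or.inr ⟨hb, ha, h⟩

def Ext (P : α → α → α → Prop) (S : Set α) (x : α) : Prop :=
  x ∈ S ∧ ∀ y ∈ S, ∀ z ∈ S, y ≠ x → z ≠ x → y ≠ z → P x y z

def Dom (P : α → α → α → Prop) (A : Set α) : Set (α → α → Prop) :=
  {q | IsLinearOrderOn A q ∧ ∀ x y z, y ≠ z → q y x → q z x → P x y z}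

def app (A : Set α) (a : α) (q : α → α → Prop) : α → α → Prop :=
  fun x y => q x y ∨ (x ∈ A \ {a} ∧ y = a)

lemma Ext.mono {P : α → α → α → Prop} {S A : Set α} {x : α} (h : Ext P S x) (hA : A ⊆ S)
    (hx : x ∈ A) : Ext P A x :=
  ⟨hx, fun y hy z hz => h.2 y (hA hy) z (hA hz)⟩

lemma restrict_mem_Dom {P : α → α → α → Prop} {S A : Set α} {q : α → α → Prop}
    (hq : q ∈ Dom P S) (hA : A ⊆ S) : restrictRel A q ∈ Dom P A :=
  ⟨restrict_lin hq.1 hA, fun x y z hyz h h' => hq.2 x y z hyz h.2.2 h'.2.2⟩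

lemma app_mem_Dom {P : α → α → α → Prop} {A : Set α} {a : α} {q : α → α → Prop}
    (ha : Ext P A a) (hq : q ∈ Dom P (A \ {a})) : app A a q ∈ Dom P A := by
  obtain ⟨hl, hP⟩ := hq
  have haq : ∀ x, ¬ q a x := fun x h => (hl.1 _ _ h).1.2 rfl
  have haq' : ∀ x, ¬ q x a := fun x h => (hl.1 _ _ h).2.2 rfl
  refine ⟨⟨?_, ?_, ?_, ?_⟩, ?_⟩
  · rintro x y (h | ⟨h, rfl⟩)
    · exact ⟨(hl.1 _ _ h).1.1, (hl.1 _ _ h).2.1⟩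
    · exact ⟨h.1, ha.1⟩
  · rintro x hx (h | ⟨h, rfl⟩)
    · exact irr hl h
    · exact h.2 rfl
  · rintro x hx y hy z hz (h | ⟨h, rfl⟩) (h' | ⟨h', rfl⟩)
    · exact Or.inl (hl.2.2.1 x (hl.1 _ _ h).1 y (hl.1 _ _ h).2 z (hl.1 _ _ h').2 h h')
    · exact Or.inr ⟨(hl.1 _ _ h).1, rfl⟩
    · exact absurd h' (haq _)
    · exact absurd rfl h'.2
  · intro x hx y hy hxy
    by_cases hxa : x = a
    · subst hxa
      exact Or.inr (Or.inr ⟨⟨hy, fun h => hxy h.symm⟩, rfl⟩)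
    · by_cases hya : y = a
      · exact Or.inl (Or.inr ⟨⟨hx, hxa⟩, hya⟩)
      · rcases hl.2.2.2 x ⟨hx, hxa⟩ y ⟨hy, hya⟩ hxy with h | h
        · exact Or.inl (Or.inl h)
        · exact Or.inr (Or.inl h)
  · rintro x y z hyz (h | ⟨h, rfl⟩) (h' | ⟨h', hx⟩)
    · exact hP x y z hyz h h'
    · exact absurd (hx ▸ h) (haq' _)
    · exact absurd h' (haq' _)
    · exact ha.2 y h.1 z h'.1 h.2 h'.2 hyz

lemma restrict_app {A : Set α} {a : α} {q : α → α → Prop}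
    (hq : IsLinearOrderOn (A \ {a}) q) : restrictRel (A \ {a}) (app A a q) = q := by
  funext x y
  apply propext
  constructor
  · rintro ⟨hx, hy, h | ⟨_, h⟩⟩
    · exact h
    · exact absurd h hy.2
  · intro h
    exact ⟨(hq.1 _ _ h).1, (hq.1 _ _ h).2, Or.inl h⟩

lemma app_restrict {A : Set α} {a : α} {q : α → α → Prop} (ha : a ∈ A)
    (hq : IsLinearOrderOn A q) (hb : ∀ b ∈ A, b ≠ a → q b a) :
    app A a (restrictRel (A \ {a}) q) = q := by
  funext x y
  apply propext
  constructor
  · rintro (h | ⟨h, rfl⟩)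
    · exact h.2.2
    · exact hb x h.1 h.2
  · intro h
    have hx := (hq.1 _ _ h).1
    have hy := (hq.1 _ _ h).2
    have hxa : x ≠ a := by
      rintro rfl
      by_cases hyx : y = x
      · subst hyx; exact irr hq h
      · exact asymm' hq h (hb y hy hyx)
    by_cases hya : y = a
    · exact Or.inr ⟨⟨hx, hxa⟩, hya⟩
    · exact Or.inl ⟨⟨hx, hxa⟩, ⟨hy, hya⟩, h⟩

lemma bot_ext {P : α → α → α → Prop} {A : Set α} {a : α} {q : α → α → Prop}
    (hq : q ∈ Dom P A) (ha : a ∈ A) (hb : ∀ b ∈ A, b ≠ a → q b a) : Ext P A a :=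
  ⟨ha, fun y hy z hz hya hza hyz => hq.2 a y z hyz (hb y hy hya) (hb z hz hza)⟩

structure Good (P : α → α → α → Prop) (X : Set α) : Prop where
  two : ∀ S ⊆ X, 2 ≤ S.ncard → ∃ u v, u ≠ v ∧ Ext P S u ∧ Ext P S v
  tri : ∀ S ⊆ X, ∀ a b c, a ≠ b → a ≠ c → b ≠ c → Ext P S a → Ext P S b → Ext P S c → False

lemma card_Dom {P : α → α → α → Prop} {X : Set α} (hX : X.Finite) (hG : Good P X) (k : ℕ) :
    ∀ A ⊆ X, A.ncard = k + 1 → (Dom P A).Finite ∧ (Dom P A).ncard = 2 ^ k := by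
  induction k with
  | zero =>
    intro A hA hk
    obtain ⟨a, rfl⟩ := Set.ncard_eq_one.1 hk
    have : Dom P {a} = {fun _ _ => False} := by
      ext q
      constructor
      · intro hq
        funext x y
        apply propext
        constructor
        · intro h
          have h1 := hq.1.1 _ _ h
          have hx : x = a := h1.1
          have hy : y = a := h1.2
          subst hx; subst hy
          exact irr hq.1 h
        · exact False.elim
      · rintro rfl
        refine ⟨⟨fun _ _ h => h.elim, fun _ _ h => h, fun _ _ _ _ _ _ h => h.elim, ?_⟩,
          fun _ _ _ _ h => h.elim⟩
        intro x hx y hy hxy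
        exact absurd (hx.trans hy.symm) hxy
    rw [this]
    simp
  | succ k ih =>
    intro A hA hk
    have hAf : A.Finite := hX.subset hA
    obtain ⟨u, v, huv, hu, hv⟩ := hG.two A hA (by omega)
    have hU := ih (A \ {u}) (Set.sdiff_subset.trans hA)
      (by rw [Set.ncard_sdiff_singleton_of_mem hu.1]; omega)
    have hV := ih (A \ {v}) (Set.sdiff_subset.trans hA)
      (by rw [Set.ncard_sdiff_singleton_of_mem hv.1]; omega)
    have heq : Dom P A = app A u '' Dom P (A \ {u}) ∪ app A v '' Dom P (A \ {v}) := by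
      ext q
      constructor
      · intro hq
        obtain ⟨a, ha, hb⟩ := exists_bot hq.1 hAf ⟨u, hu.1⟩ subset_rfl
        have hae := bot_ext hq ha hb
        have hauv : a = u ∨ a = v := by
          by_contra! h
          exact hG.tri A hA a u v h.1 h.2 huv hae hu hv
        rcases hauv with rfl | rfl
        · exact Or.inl ⟨_, restrict_mem_Dom hq Set.sdiff_subset, app_restrict ha hq.1 hb⟩
        · exact Or.inr ⟨_, restrict_mem_Dom hq Set.sdiff_subset, app_restrict ha hq.1 hb⟩
      · rintro (⟨p, hp, rfl⟩ | ⟨p, hp, rfl⟩)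
        · exact app_mem_Dom hu hp
        · exact app_mem_Dom hv hp
    have hinj : ∀ a, Set.InjOn (app A a) (Dom P (A \ {a})) := by
      intro a p hp q hq h
      rw [← restrict_app hp.1, h, restrict_app hq.1]
    have hdis : Disjoint (app A u '' Dom P (A \ {u})) (app A v '' Dom P (A \ {v})) := by
      rw [Set.disjoint_left]
      rintro _ ⟨p, hp, rfl⟩ ⟨p', hp', h⟩
      have h1 : app A u p v u := Or.inr ⟨⟨hv.1, huv.symm⟩, rfl⟩
      have h2 : app A u p u v := by
        rw [← h]; exact Or.inr ⟨⟨hu.1, huv⟩, rfl⟩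
      exact asymm' (app_mem_Dom hu hp).1 h1 h2
    rw [heq]
    refine ⟨(hU.1.image _).union (hV.1.image _), ?_⟩
    rw [Set.ncard_union_eq hdis (hU.1.image _) (hV.1.image _), (hinj u).ncard_image,
      (hinj v).ncard_image, hU.2, hV.2]
    ring

lemma extend {P : α → α → α → Prop} {X : Set α} (hX : X.Finite) (hG : Good P X) (k : ℕ) :
    ∀ S ⊆ X, S.ncard = k → ∀ A ⊆ S, ∀ q ∈ Dom P A, ∃ p ∈ Dom P S, restrictRel A p = q := by
  induction k with
  | zero =>
    intro S hS hk A hA q hq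
    have : S = ∅ := (Set.ncard_eq_zero (hX.subset hS)).1 hk
    subst this
    have : A = ∅ := Set.subset_empty_iff.1 hA
    subst this
    refine ⟨q, hq, ?_⟩
    funext x y
    exact propext ⟨fun h => h.2.2, fun h => absurd (hq.1.1 _ _ h).1 (by simp)⟩
  | succ k ih =>
    intro S hS hk A hA q hq
    have hSf : S.Finite := hX.subset hS
    by_cases hex : ∃ u, Ext P S u ∧ u ∉ A
    · obtain ⟨u, hu, huA⟩ := hex
      have hAu : A ⊆ S \ {u} := fun x hx => ⟨hA hx, fun h => huA (by cases h; exact hx)⟩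
      obtain ⟨p, hp, hpq⟩ := ih (S \ {u}) (Set.sdiff_subset.trans hS)
        (by rw [Set.ncard_sdiff_singleton_of_mem hu.1]; omega) A hAu q hq
      refine ⟨app S u p, app_mem_Dom hu hp, ?_⟩
      rw [← hpq]
      funext x y
      apply propext
      constructor
      · rintro ⟨hx, hy, h | ⟨_, rfl⟩⟩
        · exact ⟨hx, hy, h⟩
        · exact absurd hy huA
      · rintro ⟨hx, hy, h⟩
        exact ⟨hx, hy, Or.inl h⟩
    · push Not at hex
      have hAf : A.Finite := hSf.subset hA
      have key : ∃ a ∈ A, Ext P S a ∧ ∀ b ∈ A, b ≠ a → q b a := by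
        rcases Nat.eq_zero_or_pos k with rfl | hkpos
        · obtain ⟨s, rfl⟩ := Set.ncard_eq_one.1 hk
          have hs : Ext P {s} s := ⟨rfl, fun y hy z hz hys => absurd hy hys⟩
          refine ⟨s, hex s hs, hs, fun b hb hbs => absurd (hA hb) hbs⟩
        · obtain ⟨u, v, huv, hu, hv⟩ := hG.two S hS (by omega)
          obtain ⟨a, ha, hb⟩ := exists_bot hq.1 hAf ⟨u, hex u hu⟩ subset_rfl
          refine ⟨a, ha, ?_, hb⟩
          by_contra hna
          exact hG.tri A (hA.trans hS) a u v (fun h => hna (h ▸ hu)) (fun h => hna (h ▸ hv)) huv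
            (bot_ext hq ha hb) (hu.mono hA (hex u hu)) (hv.mono hA (hex v hv))
      obtain ⟨a, ha, hae, hb⟩ := key
      obtain ⟨p, hp, hpq⟩ := ih (S \ {a}) (Set.sdiff_subset.trans hS)
        (by rw [Set.ncard_sdiff_singleton_of_mem hae.1]; omega) (A \ {a})
        (Set.sdiff_subset_sdiff_left hA) _ (restrict_mem_Dom hq Set.sdiff_subset)
      refine ⟨app S a p, app_mem_Dom hae hp, ?_⟩
      rw [← app_restrict ha hq.1 hb, ← hpq]
      funext x y
      apply propext
      constructor
      · rintro ⟨hx, hy, h | ⟨hxa, rfl⟩⟩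
        · have h1 := hp.1.1 _ _ h
          exact Or.inl ⟨⟨hx, h1.1.2⟩, ⟨hy, h1.2.2⟩, h⟩
        · exact Or.inr ⟨⟨hx, hxa.2⟩, rfl⟩
      · rintro (h | ⟨h, rfl⟩)
        · exact ⟨h.1.1, h.2.1.1, Or.inl h.2.2⟩
        · exact ⟨h.1, ha, Or.inr ⟨⟨hA h.1, h.2⟩, rfl⟩⟩

lemma restrictDom_eq {P : α → α → α → Prop} {X : Set α} (hX : X.Finite) (hG : Good P X)
    {A : Set α} (hA : A ⊆ X) : restrictDom A (Dom P X) = Dom P A := by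
  ext q
  constructor
  · rintro ⟨p, hp, rfl⟩
    exact restrict_mem_Dom hp hA
  · intro hq
    obtain ⟨p, hp, h⟩ := extend hX hG _ X subset_rfl rfl A hA q hq
    exact ⟨p, hp, h⟩

/-- `x` is ranked last among `x, y, z` by some order of `D` -/
def Bt (D : Set (α → α → Prop)) (x y z : α) : Prop := ∃ s ∈ D, s y x ∧ s z x

def PD (D : Set (α → α → Prop)) (r : α → α → Prop) (x y z : α) : Prop :=
  Bt D x y z ∨ ((r y x ∨ r z x) ∧ ¬ (Bt D y x z ∧ Bt D z x y))

lemma Bt.swap {D : Set (α → α → Prop)} {x y z : α} (h : Bt D x y z) : Bt D x z y := by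
  obtain ⟨s, hs, h1, h2⟩ := h
  exact ⟨s, hs, h2, h1⟩

lemma PD.swap {D : Set (α → α → Prop)} {r : α → α → Prop} {x y z : α} (h : PD D r x y z) :
    PD D r x z y := by
  rcases h with h | ⟨h, h'⟩
  · exact Or.inl h.swap
  · exact Or.inr ⟨h.symm, fun g => h' ⟨g.2, g.1⟩⟩

lemma bt_tri {X : Set α} {D : Set (α → α → Prop)} (hD : IsArrowSinglePeaked X D) {a b c : α}
    (ha : a ∈ X) (hb : b ∈ X) (hc : c ∈ X) (hab : a ≠ b) (hac : a ≠ c) (hbc : b ≠ c)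
    (h1 : Bt D a b c) (h2 : Bt D b a c) (h3 : Bt D c a b) : False := by
  obtain ⟨x, hx, h⟩ := hD.2 {a, b, c} (by
    rintro x (rfl | rfl | rfl) <;> assumption)
    (Set.ncard_eq_three.2 ⟨a, b, c, hab, hac, hbc, rfl⟩)
  rcases hx with rfl | rfl | rfl
  · obtain ⟨s, hs, g1, g2⟩ := h1
    apply h s hs
    rintro y (rfl | rfl | rfl) hy <;> first | assumption | exact absurd rfl hy
  · obtain ⟨s, hs, g1, g2⟩ := h2
    apply h s hs
    rintro y (rfl | rfl | rfl) hy <;> first | assumption | exact absurd rfl hy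
  · obtain ⟨s, hs, g1, g2⟩ := h3
    apply h s hs
    rintro y (rfl | rfl | rfl) hy <;> first | assumption | exact absurd rfl hy

/-- sorted version: `r a b`, `r b c` -/
lemma pd_tri_sorted {X : Set α} {D : Set (α → α → Prop)} (hD : IsArrowSinglePeaked X D)
    {r : α → α → Prop} (hr : r ∈ D) {a b c : α} (h1 : r a b) (h2 : r b c)
    (ha : PD D r a b c) (hb : PD D r b a c) : False := by
  have hl := hD.1 r hr
  have hac : r a c :=
    hl.2.2.1 a (hl.1 _ _ h1).1 b (hl.1 _ _ h1).2 c (hl.1 _ _ h2).2 h1 h2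
  have hc : Bt D c a b := ⟨r, hr, hac, h2⟩
  rcases ha with ha | ⟨ha | ha, -⟩
  · rcases hb with hb | ⟨-, hb⟩
    · refine bt_tri hD (hl.1 _ _ h1).1 (hl.1 _ _ h1).2 (hl.1 _ _ h2).2 ?_ ?_ ?_ ha hb hc
      · rintro rfl; exact irr hl h1
      · rintro rfl; exact irr hl hac
      · rintro rfl; exact irr hl h2
    · exact hb ⟨ha, hc.swap⟩
  · exact asymm' hl h1 ha
  · exact asymm' hl hac ha

lemma pd_tri {X : Set α} {D : Set (α → α → Prop)} (hD : IsArrowSinglePeaked X D)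
    {r : α → α → Prop} (hr : r ∈ D) {a b c : α} (ha : a ∈ X) (hb : b ∈ X) (hc : c ∈ X)
    (hab : a ≠ b) (hac : a ≠ c) (hbc : b ≠ c)
    (h1 : PD D r a b c) (h2 : PD D r b a c) (h3 : PD D r c a b) : False := by
  have hl := hD.1 r hr
  have t := hl.2.2.1
  have s := @pd_tri_sorted α X D hD r hr
  rcases hl.2.2.2 a ha b hb hab with g1 | g1 <;> rcases hl.2.2.2 a ha c hc hac with g2 | g2 <;>
    rcases hl.2.2.2 b hb c hc hbc with g3 | g3
  · exact s g1 g3 h1 h2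
  · exact s g2 g3 h1.swap h3
  · exact asymm' hl (t a ha b hb c hc g1 g3) g2
  · exact s g2 g1 h3 h1.swap
  · exact s g1 g2 h2 h1
  · exact asymm' hl (t b hb a ha c hc g1 g2) g3
  · exact s g3 g2 h2.swap h3.swap
  · exact s g3 g1 h3.swap h2.swap

lemma good_PD {X : Set α} (hX : X.Finite) {D : Set (α → α → Prop)}
    (hD : IsArrowSinglePeaked X D) {r : α → α → Prop} (hr : r ∈ D) : Good (PD D r) X := by
  have hl := hD.1 r hr
  refine ⟨?_, ?_⟩
  · intro S hS h2
    have hSf := hX.subset hS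
    have botE : ∀ s ∈ D, ∀ e ∈ S, (∀ b ∈ S, b ≠ e → s b e) → Ext (PD D r) S e :=
      fun s hs e he hb => ⟨he, fun y hy z hz hye hze _ =>
        Or.inl ⟨s, hs, hb y hy hye, hb z hz hze⟩⟩
    have hne : S.Nonempty := by
      rw [← Set.ncard_pos hSf]; omega
    obtain ⟨d, hd, hdb⟩ := exists_bot hl hSf hne hS
    have hdE := botE r hr d hd hdb
    have hne' : (S \ {d}).Nonempty := by
      rw [← Set.ncard_pos (hSf.subset Set.sdiff_subset), Set.ncard_sdiff_singleton_of_mem hd]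
      omega
    obtain ⟨c, hc, hcb⟩ := exists_bot hl (hSf.subset Set.sdiff_subset) hne'
      (Set.sdiff_subset.trans hS)
    by_cases hcE : Ext (PD D r) S c
    · exact ⟨c, d, hc.2, hcE, hdE⟩
    · have fin : ∀ y ∈ S, ∀ s ∈ D, s d y → ∃ u v, u ≠ v ∧ Ext (PD D r) S u ∧ Ext (PD D r) S v := by
        intro y hy s hs hdy
        obtain ⟨e, he, heb⟩ := exists_bot (hD.1 s hs) hSf hne hS
        refine ⟨e, d, ?_, botE s hs e he heb, hdE⟩
        rintro rfl
        by_cases hye : y = e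
        · subst hye; exact irr (hD.1 s hs) hdy
        · exact asymm' (hD.1 s hs) hdy (heb y hy hye)
      have : ∃ y ∈ S, ∃ z ∈ S, y ≠ c ∧ z ≠ c ∧ y ≠ z ∧ ¬ PD D r c y z := by
        by_contra! h
        exact hcE ⟨hc.1, h⟩
      obtain ⟨y, hy, z, hz, hyc, hzc, hyz, hn⟩ := this
      by_cases hyd : y = d
      · subst hyd
        have hrz := hcb z ⟨hz, fun h => hyz h.symm⟩ hzc
        have : Bt D z c y := by
          by_contra hb
          exact hn (Or.inr ⟨Or.inr hrz, fun g => hb g.2⟩)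
        obtain ⟨s, hs, -, h⟩ := this
        exact fin z hz s hs h
      · have hry := hcb y ⟨hy, hyd⟩ hyc
        by_cases hzd : z = d
        · subst hzd
          have : Bt D y c z := by
            by_contra hb
            exact hn (Or.inr ⟨Or.inl hry, fun g => hb g.1⟩)
          obtain ⟨s, hs, -, h⟩ := this
          exact fin y hy s hs h
        · exact absurd (Or.inl ⟨r, hr, hry, hcb z ⟨hz, hzd⟩ hzc⟩) hn
  · intro S hS a b c hab hac hbc ha hb hc
    exact pd_tri hD hr (hS ha.1) (hS hb.1) (hS hc.1) hab hac hbc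
      (ha.2 b hb.1 c hc.1 hab.symm hac.symm hbc)
      (hb.2 a ha.1 c hc.1 hab hbc.symm hac)
      (hc.2 a ha.1 b hb.1 hac hbc hab)

lemma asp_Dom {X : Set α} {D : Set (α → α → Prop)} (hD : IsArrowSinglePeaked X D)
    {r : α → α → Prop} (hr : r ∈ D) : IsArrowSinglePeaked X (Dom (PD D r) X) := by
  refine ⟨fun q hq => hq.1, ?_⟩
  intro T hT h3
  obtain ⟨a, b, c, hab, hac, hbc, rfl⟩ := Set.ncard_eq_three.1 h3
  by_contra! h
  obtain ⟨p, hp, hpa⟩ := h a (by simp)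
  obtain ⟨q, hq, hqb⟩ := h b (by simp)
  obtain ⟨s, hs, hsc⟩ := h c (by simp)
  exact pd_tri hD hr (hT (by simp)) (hT (by simp)) (hT (by simp)) hab hac hbc
    (hp.2 a b c hbc (hpa b (by simp) hab.symm) (hpa c (by simp) hac.symm))
    (hq.2 b a c hac (hqb a (by simp) hab) (hqb c (by simp) hbc.symm))
    (hs.2 c a b hab (hsc a (by simp) hac) (hsc b (by simp) hbc))

lemma exists_lin (X : Set α) : ∃ r : α → α → Prop, IsLinearOrderOn X r := by
  have h : IsLinearOrderOn (Set.univ : Set α) WellOrderingRel :=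
    ⟨fun _ _ _ => ⟨trivial, trivial⟩, fun a _ => irrefl_of WellOrderingRel a,
      fun a _ b _ c _ h h' => trans_of WellOrderingRel h h',
      fun a _ b _ hab => by
        rcases trichotomous_of WellOrderingRel a b with h | h | h
        · exact Or.inl h
        · exact absurd h hab
        · exact Or.inr h⟩
  exact ⟨_, restrict_lin h (Set.subset_univ X)⟩

lemma nonempty_max {X : Set α} {D : Set (α → α → Prop)} (hD : IsMaximalArrowSinglePeaked X D) :
    D.Nonempty := by
  by_contra hne
  rw [Set.not_nonempty_iff_eq_empty] at hne
  obtain ⟨r, hr⟩ := exists_lin X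
  have h := hD.2 {r} (by simp [hne]) ⟨fun q hq => by cases hq; exact hr, by
    intro T hT h3
    obtain ⟨a, b, c, hab, hac, hbc, rfl⟩ := Set.ncard_eq_three.1 h3
    by_contra! h
    obtain ⟨p, rfl, hpa⟩ := h a (by simp)
    obtain ⟨q, rfl, hqb⟩ := h b (by simp)
    exact asymm' hr (hpa b (by simp) hab.symm) (hqb a (by simp) hab)⟩
  rw [hne] at h
  exact Set.singleton_ne_empty _ h

end ASP

/-- Every maximal Arrow's single-peaked domain on an `n`-element set is exactly
`(k, 2^(k-1))`-abundant for every `1 ≤ k ≤ n`; in particular it has exactly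
`2^(n-1)` orders. -/
theorem maximal_arrow_single_peaked_exactly_abundant {α : Type*} (n : ℕ) (hn : 1 ≤ n)
    (X : Set α) (hX : X.Finite) (hXcard : X.ncard = n)
    (D : Set (α → α → Prop)) (hD : IsMaximalArrowSinglePeaked X D) :
    (∀ k : ℕ, 1 ≤ k → k ≤ n → IsExactlyAbundant X D k (2 ^ (k - 1))) ∧
      D.ncard = 2 ^ (n - 1) := by
  obtain ⟨r, hr⟩ := ASP.nonempty_max hD
  have hG := ASP.good_PD hX hD.1 hr
  have hDe : ASP.Dom (ASP.PD D r) X = D := by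
    refine hD.2 _ ?_ (ASP.asp_Dom hD.1 hr)
    intro q hq
    exact ⟨hD.1.1 q hq, fun x y z _ h h' => Or.inl ⟨q, hq, h, h'⟩⟩
  have hcard : ∀ A ⊆ X, ∀ k, 1 ≤ k → A.ncard = k → (restrictDom A D).ncard = 2 ^ (k - 1) := by
    intro A hA k hk hAk
    have h := ASP.restrictDom_eq hX hG hA
    rw [hDe] at h
    rw [h]
    exact (ASP.card_Dom hX hG (k - 1) A hA (by omega)).2
  refine ⟨fun k hk hkn => ⟨fun A hA hAk => (hcard A hA k hk hAk).ge, fun h => ?_⟩, ?_⟩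
  · obtain ⟨A, hA, hAk⟩ := Set.exists_subset_card_eq (s := X) (n := k) (by omega)
    have h1 := h A hA hAk
    rw [hcard A hA k hk hAk] at h1
    omega
  · have h := (ASP.card_Dom hX hG (n - 1) X subset_rfl (by omega)).2
    rwa [hDe] at h
end

section
/- For every n ≥ 1, every subset A ⊆ {1,…,n}, and every k with 1 ≤ k ≤ n, the set-alternating domain D_A on {1,…,n} is (k, 2^{k-1})-abundant: its restriction to every k-element subset of {1,…,n} contains at least 2^{k-1} distinct linear orders. Moreover, if k < n/2 then D_A is exactly (k, 2^{k-1})-abundant, i.e., some k-element subset has restriction of size exactly 2^{k-1}. -/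
/-- The set-alternating domain `D_A` on `{1,…,n}` determined by `A ⊆ {1,…,n}`:
all linear orders `r` on `{1,…,n}` such that for every triple `a < b < c`,
if `b ∈ A` then `r` does not rank `a` last among `{a,b,c}`, and if `b ∉ A` then
`r` does not rank `c` first among `{a,b,c}`. -/
def setAlternating (n : ℕ) (A : Set ℕ) : Set (ℕ → ℕ → Prop) :=
  { r | IsLinearOrderOn (Set.Icc 1 n) r ∧
      ∀ a b c : ℕ, a ∈ Set.Icc 1 n → b ∈ Set.Icc 1 n → c ∈ Set.Icc 1 n →
        a < b → b < c →
          (b ∈ A → ¬ (r b a ∧ r c a)) ∧ (b ∉ A → ¬ (r c a ∧ r c b)) }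

/-- glue predicate -/
def glueP (B S : Set ℕ) (m : ℕ) : Prop :=
  ∃ s ∈ S, s ≤ m ∧ ∀ b ∈ B, b ≤ s ∨ m < b

/-- inversion predicate -/
def invP (A : Set ℕ) (g : ℕ → Prop) (a b : ℕ) : Prop :=
  a < b ∧ (∀ m, a ≤ m → m < b → g m) ∧ (¬ g (a - 1) ∨ a ∈ A) ∧ (¬ g b ∨ b ∉ A)

/-- the block order -/
def blockRel (n : ℕ) (A : Set ℕ) (g : ℕ → Prop) (a b : ℕ) : Prop :=
  a ∈ Set.Icc 1 n ∧ b ∈ Set.Icc 1 n ∧ ((a < b ∧ ¬ invP A g a b) ∨ invP A g b a)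

theorem invP_mid {A : Set ℕ} {g : ℕ → Prop} {a b c : ℕ} (hab : a < b) (hbc : b < c)
    (h : invP A g a c) : (b ∉ A → invP A g a b) ∧ (b ∈ A → invP A g b c) := by
  obtain ⟨h1, h2, h3, h4⟩ := h
  refine ⟨fun hb => ⟨hab, fun m hm hm' => h2 m hm (by omega), h3, Or.inr hb⟩,
    fun hb => ⟨hbc, fun m hm hm' => h2 m (by omega) hm', Or.inr hb, h4⟩⟩

theorem invP_left {A : Set ℕ} {g : ℕ → Prop} {a b c : ℕ} (hbc : b < c)
    (h : invP A g a b) (hg : ∀ m, a ≤ m → m < c → g m) : b ∉ A := by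
  obtain ⟨h1, h2, h3, h4⟩ := h
  rcases h4 with h4 | h4
  · exact absurd (hg b (by omega) hbc) h4
  · exact h4

theorem invP_right {A : Set ℕ} {g : ℕ → Prop} {a b c : ℕ} (hab : a < b)
    (h : invP A g b c) (hg : ∀ m, a ≤ m → m < c → g m) : b ∈ A := by
  obtain ⟨h1, h2, h3, h4⟩ := h
  rcases h3 with h4 | h4
  · exact absurd (hg (b-1) (by omega) (by omega)) h4
  · exact h4

theorem invP_not_trans {A : Set ℕ} {g : ℕ → Prop} {a b c : ℕ}
    (h : invP A g a b) (h' : invP A g b c) : False := by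
  have hg : ∀ m, a ≤ m → m < c → g m := by
    intro m h1 h2
    by_cases hm : m < b
    · exact h.2.1 m h1 hm
    · exact h'.2.1 m (by omega) h2
  exact invP_left h'.1 h hg (invP_right h.1 h' hg)

theorem blockRel_mem (n : ℕ) (A : Set ℕ) (g : ℕ → Prop) :
    blockRel n A g ∈ setAlternating n A := by
  refine ⟨⟨fun a b h => ⟨h.1, h.2.1⟩, ?_, ?_, ?_⟩, ?_⟩
  · rintro a _ ⟨_, _, h | h⟩
    · omega
    · exact absurd h.1 (by omega)
  · rintro a ha b hb c hc ⟨_, _, h1⟩ ⟨_, _, h2⟩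
    refine ⟨ha, hc, ?_⟩
    rcases h1 with ⟨h1, h1'⟩ | h1 <;> rcases h2 with ⟨h2, h2'⟩ | h2
    · left
      refine ⟨by omega, fun h => ?_⟩
      have := invP_mid h1 h2 h
      tauto
    · rcases lt_trichotomy a c with h | h | h
      · left
        refine ⟨h, fun h3 => invP_not_trans h3 h2⟩
      · subst h; tauto
      · right
        have := invP_mid h h1 h2
        by_cases haA : a ∈ A
        · exact absurd (this.2 haA) h1'
        · exact this.1 haA
    · rcases lt_trichotomy a c with h | h | h
      · left
        refine ⟨h, fun h3 => invP_not_trans h1 h3⟩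
      · subst h; tauto
      · right
        have := invP_mid h2 h h1
        by_cases haA : c ∈ A
        · exact this.2 haA
        · exact absurd (this.1 haA) h2'
    · exact (invP_not_trans h2 h1).elim
  · intro a ha b hb hab
    by_cases h1 : invP A g a b
    · exact Or.inr ⟨hb, ha, Or.inr h1⟩
    by_cases h2 : invP A g b a
    · exact Or.inl ⟨ha, hb, Or.inr h2⟩
    rcases lt_or_gt_of_ne hab with h | h
    · exact Or.inl ⟨ha, hb, Or.inl ⟨h, h1⟩⟩
    · exact Or.inr ⟨hb, ha, Or.inl ⟨h, h2⟩⟩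
  · intro a b c ha hb hc hab hbc
    constructor
    · rintro hbA ⟨⟨_, _, h1⟩, ⟨_, _, h2⟩⟩
      rcases h1 with h1 | h1
      · omega
      rcases h2 with h2 | h2
      · omega
      exact invP_left hbc h1 h2.2.1 hbA
    · rintro hbA ⟨⟨_, _, h1⟩, ⟨_, _, h2⟩⟩
      rcases h1 with h1 | h1
      · omega
      rcases h2 with h2 | h2
      · omega
      exact hbA (invP_right hab h2 h1.2.1)

theorem glue_block {n : ℕ} {A B S : Set ℕ} (hB : B ⊆ Set.Icc 1 n) (M : ℕ) (hM : M ∈ B)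
    (hMax : ∀ b ∈ B, b ≤ M) (hS : S ⊆ B \ {M}) (b : ℕ) (hb : b ∈ B) :
    b ∈ S ↔ ∃ x ∈ B, ∃ y ∈ B, x ≤ b ∧ b < y ∧
      restrictRel B (blockRel n A (glueP B S)) y x := by
  constructor
  · intro hbS
    have gb : glueP B S b := ⟨b, hbS, le_rfl, fun b' _ => by omega⟩
    have hbM : b < M := lt_of_le_of_ne (hMax b hb) (hS hbS).2
    have gM : ¬ glueP B S M := by
      rintro ⟨s, hs, hsM, h⟩
      have h1 := h M hM
      have h2 : s ≠ M := (hS hs).2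
      omega
    classical
    have ex : ∃ x, x ≤ b ∧ ∀ m, x ≤ m → m ≤ b → glueP B S m :=
      ⟨b, le_rfl, fun m h1 h2 => by rwa [le_antisymm h2 h1]⟩
    have ey : ∃ y, b < y ∧ ¬ glueP B S y := ⟨M, hbM, gM⟩
    obtain ⟨hx1, hx2⟩ := Nat.find_spec ex
    have hxm := fun m => @Nat.find_min _ _ ex m
    obtain ⟨hy1, hy2⟩ := Nat.find_spec ey
    have hym := fun m => @Nat.find_min _ _ ey m
    generalize Nat.find ex = x at *
    generalize Nat.find ey = y at *
    have hyg : ∀ m, b ≤ m → m < y → glueP B S m := by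
      intro m h1 h2
      rcases h1.eq_or_lt with h | h
      · rwa [← h]
      · by_contra h3
        exact hym m h2 ⟨h, h3⟩
    have hxg : ¬ glueP B S (x - 1) ∧ x ∈ B := by
      obtain ⟨s, hs, hsx, h⟩ := hx2 x le_rfl hx1
      have hs1 := (hB (hS hs).1).1
      have h1 : ¬ glueP B S (x - 1) := by
        intro hg
        apply hxm (x - 1) (by omega)
        refine ⟨by omega, fun m h1 h2 => ?_⟩
        by_cases hm : m = x - 1
        · rwa [hm]
        · exact hx2 m (by omega) h2
      refine ⟨h1, ?_⟩
      have : s = x := by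
        by_contra hne
        apply h1
        refine ⟨s, hs, by omega, fun b' hb' => ?_⟩
        have := h b' hb'
        omega
      rw [← this]
      exact (hS hs).1
    have hyB : y ∈ B := by
      by_contra hyB
      apply hy2
      obtain ⟨s, hs, hsx, h⟩ := hyg (y - 1) (by omega) (by omega)
      refine ⟨s, hs, by omega, fun b' hb' => ?_⟩
      have := h b' hb'
      have : b' ≠ y := fun h => hyB (h ▸ hb')
      omega
    refine ⟨x, hxg.2, y, hyB, hx1, hy1, hyB, hxg.2, hB hyB, hB hxg.2, Or.inr ⟨by omega, ?_,
      Or.inl hxg.1, Or.inl hy2⟩⟩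
    intro m h1 h2
    by_cases hm : m ≤ b
    · exact hx2 m h1 hm
    · exact hyg m (by omega) h2
  · rintro ⟨x, hx, y, hy, hxb, hby, _, _, _, _, h | h⟩
    · omega
    · obtain ⟨s, hs, hsb, h⟩ := h.2.1 b hxb hby
      have := h b hb
      have : s = b := by omega
      rwa [← this]

theorem finite_restrict {B : Set ℕ} (hB : B.Finite) (D : Set (ℕ → ℕ → Prop)) :
    (restrictDom B D).Finite := by
  have h : ((B ×ˢ B).powerset).Finite := (hB.prod hB).finite_subsets
  refine Set.Finite.of_finite_image (f := fun r : ℕ → ℕ → Prop => {p : ℕ × ℕ | r p.1 p.2})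
    (h.subset ?_) ?_
  · rintro _ ⟨_, ⟨r, _, rfl⟩, rfl⟩ p hp
    exact ⟨hp.1, hp.2.1⟩
  · intro r _ r' _ h
    funext a b
    have := Set.ext_iff.1 h (a, b)
    exact propext this

theorem exists_max_set {B : Set ℕ} (hB : B.Finite) (hne : B.Nonempty) :
    ∃ M ∈ B, ∀ b ∈ B, b ≤ M := by
  obtain ⟨M, h1, h2⟩ := Set.exists_max_image B id hB hne
  exact ⟨M, h1, h2⟩

theorem exists_min_set {B : Set ℕ} (hB : B.Finite) (hne : B.Nonempty) :
    ∃ M ∈ B, ∀ b ∈ B, M ≤ b := by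
  obtain ⟨M, h1, h2⟩ := Set.exists_min_image B id hB hne
  exact ⟨M, h1, h2⟩

theorem abundant_lower (n : ℕ) (A : Set ℕ) (k : ℕ) (hk1 : 1 ≤ k) :
    IsAbundant (Set.Icc 1 n) (setAlternating n A) k (2 ^ (k - 1)) := by
  intro B hB hk
  have hBf : B.Finite := (Set.finite_Icc 1 n).subset hB
  have hne : B.Nonempty := by
    rw [← Set.ncard_pos hBf]; omega
  obtain ⟨M, hM, hMax⟩ := exists_max_set hBf hne
  have hc : (B \ {M}).ncard = k - 1 := by
    rw [Set.ncard_sdiff_singleton_of_mem hM, hk]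
  rw [← hc, ← Set.ncard_powerset _ (hBf.subset Set.sdiff_subset)]
  refine Set.ncard_le_ncard_of_injOn (fun S => restrictRel B (blockRel n A (glueP B S))) ?_ ?_
    (finite_restrict hBf _)
  · intro S _
    exact ⟨_, blockRel_mem n A _, rfl⟩
  · intro S hS S' hS' h
    ext b
    by_cases hb : b ∈ B
    · rw [glue_block (A := A) hB M hM hMax hS b hb, glue_block (A := A) hB M hM hMax hS' b hb]
      have h' : restrictRel B (blockRel n A (glueP B S)) =
        restrictRel B (blockRel n A (glueP B S')) := h
      rw [h']
    · exact ⟨fun h => absurd (hS h).1 hb, fun h => absurd (hS' h).1 hb⟩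

theorem lin_restrict {n : ℕ} {B : Set ℕ} (hB : B ⊆ Set.Icc 1 n) {r : ℕ → ℕ → Prop}
    (h : IsLinearOrderOn (Set.Icc 1 n) r) : IsLinearOrderOn B (restrictRel B r) := by
  obtain ⟨h1, h2, h3, h4⟩ := h
  refine ⟨fun a b h => ⟨h.1, h.2.1⟩, fun a ha h => h2 a (hB ha) h.2.2, ?_, ?_⟩
  · intro a ha b hb c hc hab hbc
    exact ⟨ha, hc, h3 a (hB ha) b (hB hb) c (hB hc) hab.2.2 hbc.2.2⟩
  · intro a ha b hb hab
    rcases h4 a (hB ha) b (hB hb) hab with h | h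
    · exact Or.inl ⟨ha, hb, h⟩
    · exact Or.inr ⟨hb, ha, h⟩

theorem lin_asymm {B : Set ℕ} {r : ℕ → ℕ → Prop} (h : IsLinearOrderOn B r) {a b : ℕ}
    (hab : r a b) (hba : r b a) : False := by
  have := h.1 a b hab
  exact h.2.1 a this.1 (h.2.2.1 a this.1 b this.2 a this.1 hab hba)

/-- two linear orders agreeing on inversions agree -/
theorem lin_ext {B : Set ℕ} {r r' : ℕ → ℕ → Prop} (h : IsLinearOrderOn B r)
    (h' : IsLinearOrderOn B r')
    (hi : ∀ a ∈ B, ∀ b ∈ B, a < b → (r b a ↔ r' b a)) : r = r' := by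
  have key : ∀ r r' : ℕ → ℕ → Prop, IsLinearOrderOn B r → IsLinearOrderOn B r' →
      (∀ a ∈ B, ∀ b ∈ B, a < b → (r b a ↔ r' b a)) → ∀ a b, r a b → r' a b := by
    intro r r' h h' hi a b hab
    obtain ⟨ha, hb⟩ := h.1 a b hab
    rcases lt_trichotomy a b with hl | hl | hl
    · rcases h'.2.2.2 a ha b hb hl.ne with h1 | h1
      · exact h1
      · exact (lin_asymm h hab ((hi a ha b hb hl).2 h1)).elim
    · subst hl
      exact absurd hab (h.2.1 a ha)
    · exact (hi b hb a ha hl).1 hab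
  funext a b
  exact propext ⟨key r r' h h' hi a b,
    key r' r h' h (fun a ha b hb hl => (hi a ha b hb hl).symm) a b⟩

theorem char1 {B : Set ℕ} {r : ℕ → ℕ → Prop} (h : IsLinearOrderOn B r)
    (hr : ∀ a ∈ B, ∀ b ∈ B, ∀ c ∈ B, a < b → b < c → ¬ (r b a ∧ r c a))
    (T : Set ℕ) (hT : T = {a | a ∈ B ∧ ∃ c ∈ B, a < c ∧ r c a})
    (a : ℕ) (ha : a ∈ B) (b : ℕ) (hb : b ∈ B) (hab : a < b) :
    r b a ↔ b ∉ T ∧ ∀ m ∈ B, a ≤ m → m < b → m ∈ T := by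
  have fwd : ∀ b ∈ B, a < b → r b a → b ∉ T ∧ ∀ m ∈ B, a ≤ m → m < b → m ∈ T := by
    intro b hb hab hba
    subst hT
    constructor
    · rintro ⟨_, d, hd, hbd, hdb⟩
      exact hr a ha b hb d hd hab hbd ⟨hba, h.2.2.1 d hd b hb a ha hdb hba⟩
    · intro m hm ham hmb
      rcases ham.eq_or_lt with rfl | ham
      · exact ⟨hm, b, hb, hab, hba⟩
      · refine ⟨hm, b, hb, hmb, ?_⟩
        rcases h.2.2.2 m hm a ha ham.ne' with h1 | h1
        · exact (hr a ha m hm b hb ham hmb ⟨h1, hba⟩).elim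
        · exact h.2.2.1 b hb a ha m hm hba h1
  refine ⟨fwd b hb hab, ?_⟩
  rintro ⟨h1, h2⟩
  have haT := h2 a ha le_rfl hab
  have haT' := haT
  rw [hT] at haT'
  obtain ⟨_, c, hc, hac, hca⟩ := haT'
  obtain ⟨h3, h4⟩ := fwd c hc hac hca
  rcases lt_trichotomy b c with hl | hl | hl
  · exact absurd (h4 b hb hab.le hl) h1
  · rwa [hl]
  · exact absurd (h2 c hc hac.le hl) h3

theorem char2 {B : Set ℕ} {r : ℕ → ℕ → Prop} (h : IsLinearOrderOn B r)
    (hr : ∀ a ∈ B, ∀ b ∈ B, ∀ c ∈ B, a < b → b < c → ¬ (r c a ∧ r c b))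
    (T : Set ℕ) (hT : T = {c | c ∈ B ∧ ∃ a ∈ B, a < c ∧ r c a})
    (a : ℕ) (ha : a ∈ B) (b : ℕ) (hb : b ∈ B) (hab : a < b) :
    r b a ↔ a ∉ T ∧ ∀ m ∈ B, a < m → m ≤ b → m ∈ T := by
  have fwd : ∀ a ∈ B, a < b → r b a → a ∉ T ∧ ∀ m ∈ B, a < m → m ≤ b → m ∈ T := by
    intro a ha hab hba
    subst hT
    constructor
    · rintro ⟨_, d, hd, hda, had⟩
      exact hr d hd a ha b hb hda hab ⟨h.2.2.1 b hb a ha d hd hba had, hba⟩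
    · intro m hm ham hmb
      rcases hmb.eq_or_lt with rfl | hmb
      · exact ⟨hm, a, ha, hab, hba⟩
      · refine ⟨hm, a, ha, ham, ?_⟩
        rcases h.2.2.2 b hb m hm hmb.ne' with h1 | h1
        · exact (hr a ha m hm b hb ham hmb ⟨hba, h1⟩).elim
        · exact h.2.2.1 m hm b hb a ha h1 hba
  refine ⟨fwd a ha hab, ?_⟩
  rintro ⟨h1, h2⟩
  have haT := h2 b hb hab le_rfl
  have haT' := haT
  rw [hT] at haT'
  obtain ⟨_, c, hc, hcb, hbc⟩ := haT'
  obtain ⟨h3, h4⟩ := fwd c hc hcb hbc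
  rcases lt_trichotomy a c with hl | hl | hl
  · exact absurd (h2 c hc hl hcb.le) h3
  · rwa [hl]
  · exact absurd (h4 a ha hl hab.le) h1

theorem upper1 {n : ℕ} {A B : Set ℕ} (hB : B ⊆ Set.Icc 1 n) (hBA : B ⊆ A) (hne : B.Nonempty) :
    (restrictDom B (setAlternating n A)).ncard ≤ 2 ^ (B.ncard - 1) := by
  have hBf : B.Finite := (Set.finite_Icc 1 n).subset hB
  obtain ⟨M, hM, hMax⟩ := exists_max_set hBf hne
  rw [← Set.ncard_sdiff_singleton_of_mem hM,
    ← Set.ncard_powerset _ (hBf.subset Set.sdiff_subset)]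
  refine Set.ncard_le_ncard_of_injOn
    (fun r => {a | a ∈ B ∧ ∃ c ∈ B, a < c ∧ r c a}) ?_ ?_
    (hBf.subset Set.sdiff_subset).finite_subsets
  · rintro r _ a ⟨ha, c, hc, hac, _⟩
    refine ⟨ha, fun h => ?_⟩
    have h1 := hMax c hc
    have h2 : a = M := h
    omega
  · rintro _ ⟨r, hr, rfl⟩ _ ⟨r', hr', rfl⟩ hT
    refine lin_ext (lin_restrict hB hr.1) (lin_restrict hB hr'.1) ?_
    intro a ha b hb hab
    rw [char1 (lin_restrict hB hr.1) ?_ _ rfl a ha b hb hab,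
      char1 (lin_restrict hB hr'.1) ?_ _ hT a ha b hb hab]
    · intro a ha b hb c hc hab hbc h
      exact (hr'.2 a b c (hB ha) (hB hb) (hB hc) hab hbc).1 (hBA hb) ⟨h.1.2.2, h.2.2.2⟩
    · intro a ha b hb c hc hab hbc h
      exact (hr.2 a b c (hB ha) (hB hb) (hB hc) hab hbc).1 (hBA hb) ⟨h.1.2.2, h.2.2.2⟩

theorem upper2 {n : ℕ} {A B : Set ℕ} (hB : B ⊆ Set.Icc 1 n) (hBA : ∀ b ∈ B, b ∉ A)
    (hne : B.Nonempty) :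
    (restrictDom B (setAlternating n A)).ncard ≤ 2 ^ (B.ncard - 1) := by
  have hBf : B.Finite := (Set.finite_Icc 1 n).subset hB
  obtain ⟨M, hM, hMin⟩ := exists_min_set hBf hne
  rw [← Set.ncard_sdiff_singleton_of_mem hM,
    ← Set.ncard_powerset _ (hBf.subset Set.sdiff_subset)]
  refine Set.ncard_le_ncard_of_injOn
    (fun r => {c | c ∈ B ∧ ∃ a ∈ B, a < c ∧ r c a}) ?_ ?_
    (hBf.subset Set.sdiff_subset).finite_subsets
  · rintro r _ a ⟨ha, c, hc, hac, _⟩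
    refine ⟨ha, fun h => ?_⟩
    have h1 := hMin c hc
    have h2 : a = M := h
    omega
  · rintro _ ⟨r, hr, rfl⟩ _ ⟨r', hr', rfl⟩ hT
    refine lin_ext (lin_restrict hB hr.1) (lin_restrict hB hr'.1) ?_
    intro a ha b hb hab
    rw [char2 (lin_restrict hB hr.1) ?_ _ rfl a ha b hb hab,
      char2 (lin_restrict hB hr'.1) ?_ _ hT a ha b hb hab]
    · intro a ha b hb c hc hab hbc h
      exact (hr'.2 a b c (hB ha) (hB hb) (hB hc) hab hbc).2 (hBA b hb) ⟨h.1.2.2, h.2.2.2⟩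
    · intro a ha b hb c hc hab hbc h
      exact (hr.2 a b c (hB ha) (hB hb) (hB hc) hab hbc).2 (hBA b hb) ⟨h.1.2.2, h.2.2.2⟩

/-- For every `n ≥ 1`, `A ⊆ {1,…,n}` and `1 ≤ k ≤ n`, the set-alternating domain `D_A`
is `(k, 2^(k-1))`-abundant; moreover if `k < n/2` it is exactly `(k, 2^(k-1))`-abundant. -/
theorem setAlternating_abundant (n : ℕ) (hn : 1 ≤ n) (A : Set ℕ)
    (hA : A ⊆ Set.Icc 1 n) (k : ℕ) (hk1 : 1 ≤ k) (hkn : k ≤ n) :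
    IsAbundant (Set.Icc 1 n) (setAlternating n A) k (2 ^ (k - 1)) ∧
      (2 * k < n → IsExactlyAbundant (Set.Icc 1 n) (setAlternating n A) k (2 ^ (k - 1))) := by
  refine ⟨abundant_lower n A k hk1, fun h2k => ⟨abundant_lower n A k hk1, fun hab => ?_⟩⟩
  have hcard : (Set.Icc 1 n \ A).ncard + A.ncard = n := by
    rw [Set.ncard_sdiff_add_ncard_of_subset hA (Set.finite_Icc 1 n), ← Finset.coe_Icc,
      Set.ncard_coe_finset]
    simp
  have hpos : ∀ B : Set ℕ, B.ncard = k → B.Nonempty := by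
    intro B hB
    apply Set.nonempty_of_ncard_ne_zero
    omega
  by_cases hc : k ≤ A.ncard
  · obtain ⟨B, hBA, hBk⟩ := Set.exists_subset_card_eq hc
    have h1 := hab B (hBA.trans hA) hBk
    have h2 := upper1 (hBA.trans hA) hBA (hpos B hBk)
    rw [hBk] at h2
    omega
  · obtain ⟨B, hBA, hBk⟩ := Set.exists_subset_card_eq (s := Set.Icc 1 n \ A) (n := k) (by omega)
    have h1 := hab B (fun b hb => (hBA hb).1) hBk
    have h2 := upper2 (n := n) (A := A) (fun b hb => (hBA hb).1) (fun b hb => (hBA hb).2)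
      (hpos B hBk)
    rw [hBk] at h2
    omega
end

section
/- Fishburn's alternating domain F_n on {1,…,n} is (6, s)-abundant for the following pairs (n, s): (6, 45), (7, 42), (8, 39), and (9, 32); that is, for each such n, the restriction of F_n to every 6-element subset of {1,…,n} contains at least s distinct linear orders. -/
/-- Fishburn's alternating domain on `{1,…,n}`: all linear orders `r` on `{1,…,n}`
such that for every triple `a < b < c`, if `b` is odd then `r` does not rank `b`
first among `{a,b,c}`, and if `b` is even then `r` does not rank `b` last among
`{a,b,c}`. -/
def fishburnAlternating (n : ℕ) : Set (ℕ → ℕ → Prop) :=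
  { r | IsLinearOrderOn (Set.Icc 1 n) r ∧
      ∀ a b c : ℕ, a ∈ Set.Icc 1 n → b ∈ Set.Icc 1 n → c ∈ Set.Icc 1 n →
        a < b → b < c →
          (Odd b → ¬ (r b a ∧ r b c)) ∧ (Even b → ¬ (r a b ∧ r c b)) }

/-- Bit index of the pair `a < b`. -/
def fbPos (a b : ℕ) : ℕ := (b - 1) * (b - 2) / 2 + (a - 1)

/-- The relation on `{1,…,n}` whose inversions are coded by the bits of `C`. -/
def fbRel (n C : ℕ) (a b : ℕ) : Prop :=
  a ∈ Set.Icc 1 n ∧ b ∈ Set.Icc 1 n ∧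
    ((a < b ∧ C.testBit (fbPos a b) = false) ∨ (b < a ∧ C.testBit (fbPos b a) = true))

/-- Condition on a triple with inversion bits `x = ab`, `y = bc`, `z = ac`. -/
def fbTriple (o x y z : Bool) : Bool :=
  (xor x y || (x == z)) && (if o then !(x && !y) else !(!x && y))

def fbValid (n C : ℕ) : Bool :=
  (List.range' 1 n).all fun a => (List.range' 1 n).all fun b =>
    !(Nat.blt a b) || (List.range' 1 n).all fun c =>
      !(Nat.blt b c) || fbTriple (Nat.beq (b % 2) 1) (C.testBit (fbPos a b))
        (C.testBit (fbPos b c)) (C.testBit (fbPos a c))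

theorem fbValid_spec {n C : ℕ} (h : fbValid n C = true) {a b c : ℕ} (ha : a ∈ Set.Icc 1 n)
    (hc : c ∈ Set.Icc 1 n) (hab : a < b) (hbc : b < c) :
    fbTriple (Nat.beq (b % 2) 1) (C.testBit (fbPos a b))
        (C.testBit (fbPos b c)) (C.testBit (fbPos a c)) = true := by
  simp only [Set.mem_Icc] at ha hc
  simp only [fbValid, List.all_eq_true] at h
  have h1 := h a (by simp [List.mem_range'_1]; omega) b (by simp [List.mem_range'_1]; omega)
  have e1 : Nat.blt a b = true := by simpa [Nat.blt_eq] using hab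
  have e2 : Nat.blt b c = true := by simpa [Nat.blt_eq] using hbc
  rw [e1] at h1
  simp only [Bool.not_true, Bool.false_or, List.all_eq_true] at h1
  have h2 := h1 c (by simp [List.mem_range'_1]; omega)
  rw [e2] at h2
  simpa using h2

theorem fbRel_lin {n C : ℕ} (h : fbValid n C = true) :
    IsLinearOrderOn (Set.Icc 1 n) (fbRel n C) := by
  refine ⟨fun a b hr => ⟨hr.1, hr.2.1⟩, ?_, ?_, ?_⟩
  · rintro a - ⟨-, -, h | h⟩ <;> omega
  · rintro a ha b hb c hc ⟨-, -, h1⟩ ⟨-, -, h2⟩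
    refine ⟨ha, hc, ?_⟩
    have key : ∀ {a b c : ℕ}, a ∈ Set.Icc 1 n → c ∈ Set.Icc 1 n → a < b → b < c →
        (C.testBit (fbPos a b) = C.testBit (fbPos b c) →
          C.testBit (fbPos a c) = C.testBit (fbPos a b)) := by
      intro a b c ha hc hab hbc
      have := fbValid_spec h ha hc hab hbc
      revert this
      generalize C.testBit (fbPos a b) = x
      generalize C.testBit (fbPos b c) = y
      generalize C.testBit (fbPos a c) = z
      generalize Nat.beq (b % 2) 1 = o
      revert x y z o
      decide
    rcases h1 with ⟨l1, h1⟩ | ⟨l1, h1⟩ <;> rcases h2 with ⟨l2, h2⟩ | ⟨l2, h2⟩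
    · left
      refine ⟨by omega, ?_⟩
      rw [key ha hc l1 l2 (by rw [h1, h2]), h1]
    · rcases lt_trichotomy a c with l | l | l
      · left
        refine ⟨l, ?_⟩
        have := key ha hb l l2
        rw [h1, h2] at this
        cases h3 : C.testBit (fbPos a c) <;> simp_all
      · subst l
        simp_all
      · right
        refine ⟨l, ?_⟩
        have := key hc hb l l1
        rw [h1, h2] at this
        cases h3 : C.testBit (fbPos c a) <;> simp_all
    · rcases lt_trichotomy a c with l | l | l
      · left
        refine ⟨l, ?_⟩
        have := key hb hc l1 l
        rw [h1, h2] at this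
        cases h3 : C.testBit (fbPos a c) <;> simp_all
      · subst l
        simp_all
      · right
        refine ⟨l, ?_⟩
        have := key hb ha l2 l
        rw [h1, h2] at this
        cases h3 : C.testBit (fbPos c a) <;> simp_all
    · right
      refine ⟨by omega, ?_⟩
      rw [key hc ha l2 l1 (by rw [h1, h2]), h2]
  · intro a ha b hb hab
    rcases lt_or_gt_of_ne hab with l | l
    · cases h3 : C.testBit (fbPos a b)
      · exact Or.inl ⟨ha, hb, Or.inl ⟨l, h3⟩⟩
      · exact Or.inr ⟨hb, ha, Or.inr ⟨l, h3⟩⟩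
    · cases h3 : C.testBit (fbPos b a)
      · exact Or.inr ⟨hb, ha, Or.inl ⟨l, h3⟩⟩
      · exact Or.inl ⟨ha, hb, Or.inr ⟨l, h3⟩⟩

theorem fbRel_mem {n C : ℕ} (h : fbValid n C = true) : fbRel n C ∈ fishburnAlternating n := by
  refine ⟨fbRel_lin h, ?_⟩
  intro a b c ha hb hc hab hbc
  have key := fbValid_spec h ha hc hab hbc
  constructor
  · rintro ho ⟨⟨-, -, h1⟩, ⟨-, -, h2⟩⟩
    have h1' : C.testBit (fbPos a b) = true := by
      rcases h1 with h1 | h1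
      · omega
      · exact h1.2
    have h2' : C.testBit (fbPos b c) = false := by
      rcases h2 with h2 | h2
      · exact h2.2
      · omega
    rw [Nat.odd_iff.1 ho, h1', h2'] at key
    simp [fbTriple] at key
  · rintro ho ⟨⟨-, -, h1⟩, ⟨-, -, h2⟩⟩
    have h1' : C.testBit (fbPos a b) = false := by
      rcases h1 with h1 | h1
      · exact h1.2
      · omega
    have h2' : C.testBit (fbPos b c) = true := by
      rcases h2 with h2 | h2
      · omega
      · exact h2.2
    rw [Nat.even_iff.1 ho, h1', h2'] at key
    simp [fbTriple] at key

/-- Bit mask of all pairs `a < b` of elements of `l`. -/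
def fbMask (l : List ℕ) : ℕ :=
  l.foldr (fun a m => l.foldr (fun b m => if Nat.blt a b then m ||| 2 ^ fbPos a b else m) m) 0

theorem fbMask_spec (l : List ℕ) (i : ℕ) (h : (fbMask l).testBit i = true) :
    ∃ a ∈ l, ∃ b ∈ l, a < b ∧ i = fbPos a b := by
  have inner : ∀ (a : ℕ) (l' : List ℕ) (m : ℕ),
      (l'.foldr (fun b m => if Nat.blt a b then m ||| 2 ^ fbPos a b else m) m).testBit i = true →
      m.testBit i = true ∨ ∃ b ∈ l', a < b ∧ i = fbPos a b := by
    intro a l' m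
    induction l' with
    | nil => intro h; exact Or.inl h
    | cons b t ih =>
      intro h
      simp only [List.foldr_cons] at h
      have fin : ∀ h : (t.foldr (fun b m => if Nat.blt a b then m ||| 2 ^ fbPos a b else m)
          m).testBit i = true, m.testBit i = true ∨ ∃ b' ∈ b :: t, a < b' ∧ i = fbPos a b' := by
        intro h
        rcases ih h with h | ⟨b', hb', h⟩
        · exact Or.inl h
        · exact Or.inr ⟨b', List.mem_cons_of_mem _ hb', h⟩
      split_ifs at h with hlt
      · rw [Nat.testBit_or, Bool.or_eq_true] at h
        rcases h with h | h
        · exact fin h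
        · rw [Nat.testBit_two_pow] at h
          refine Or.inr ⟨b, List.mem_cons_self, by simpa [Nat.blt_eq] using hlt, ?_⟩
          have := of_decide_eq_true h
          exact this.symm
      · exact fin h
  have outer : ∀ l' : List ℕ,
      (l'.foldr (fun a m => l.foldr (fun b m => if Nat.blt a b then m ||| 2 ^ fbPos a b else m) m)
        0).testBit i = true → ∃ a ∈ l', ∃ b ∈ l, a < b ∧ i = fbPos a b := by
    intro l'
    induction l' with
    | nil => intro h; simp at h
    | cons a t ih =>
      intro h
      simp only [List.foldr_cons] at h
      rcases inner a l _ h with h | ⟨b, hb, h⟩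
      · obtain ⟨a', ha', h⟩ := ih h
        exact ⟨a', List.mem_cons_of_mem _ ha', h⟩
      · exact ⟨a, List.mem_cons_self, b, hb, h⟩
  exact outer l h

/-- Insert unless the masked value is already present. -/
def fbDistinct (m : ℕ) : List ℕ → List ℕ
  | [] => []
  | c :: t => (fun acc => if acc.any (Nat.beq (c &&& m)) then acc else (c &&& m) :: acc)
      (fbDistinct m t)

theorem fbDistinct_spec (m : ℕ) (l : List ℕ) :
    (fbDistinct m l).Nodup ∧ ∀ x ∈ fbDistinct m l, ∃ c ∈ l, x = c &&& m := by
  induction l with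
  | nil => simp [fbDistinct]
  | cons c t ih =>
    simp only [fbDistinct]
    split_ifs with h
    · refine ⟨ih.1, fun x hx => ?_⟩
      obtain ⟨c', hc', e⟩ := ih.2 x hx
      exact ⟨c', List.mem_cons_of_mem _ hc', e⟩
    · refine ⟨List.nodup_cons.2 ⟨?_, ih.1⟩, fun x hx => ?_⟩
      · intro hm
        apply h
        rw [List.any_eq_true]
        exact ⟨_, hm, Nat.beq_refl _⟩
      · rcases List.mem_cons.1 hx with rfl | hx
        · exact ⟨c, List.mem_cons_self, rfl⟩
        · obtain ⟨c', hc', e⟩ := ih.2 x hx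
          exact ⟨c', List.mem_cons_of_mem _ hc', e⟩

def fbCheck (n s : ℕ) (cs : List ℕ) : Bool :=
  cs.all (fbValid n) && (List.sublistsLen 6 (List.range' 1 n)).all fun l =>
    Nat.ble s (fbDistinct (fbMask l) cs).length

theorem fb_restrict_inj {n C C' : ℕ} {A : Set ℕ} {l : List ℕ} (hl : ∀ x, x ∈ l → x ∈ A)
    (hA : A ⊆ Set.Icc 1 n)
    (h : restrictRel A (fbRel n C) = restrictRel A (fbRel n C')) :
    C &&& fbMask l = C' &&& fbMask l := by
  apply Nat.eq_of_testBit_eq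
  intro i
  rw [Nat.testBit_and, Nat.testBit_and]
  cases hm : (fbMask l).testBit i
  · simp
  · obtain ⟨a, ha, b, hb, hab, rfl⟩ := fbMask_spec l i hm
    have ha := hl a ha
    have hb := hl b hb
    have e := congrFun (congrFun h a) b
    have hba : ¬ b < a := by omega
    simp only [restrictRel, fbRel, ha, hb, hA ha, hA hb, hab, hba, true_and, false_and,
      or_false, eq_iff_iff] at e
    cases h1 : C.testBit (fbPos a b) <;> cases h2 : C'.testBit (fbPos a b) <;> simp_all

theorem finite_restrict_s4 {n : ℕ} (A : Set ℕ) (hA : A ⊆ Set.Icc 1 n) (D : Set (ℕ → ℕ → Prop)) :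
    (restrictDom A D).Finite := by
  have hf : A.Finite := (Set.finite_Icc 1 n).subset hA
  have hp : ((A ×ˢ A).powerset).Finite := (hf.prod hf).finite_subsets
  refine Set.Finite.of_finite_image (f := fun r : ℕ → ℕ → Prop => {p : ℕ × ℕ | r p.1 p.2})
    (hp.subset ?_) ?_
  · rintro _ ⟨_, ⟨r, -, rfl⟩, rfl⟩ p hp
    exact ⟨hp.1, hp.2.1⟩
  · intro r _ r' _ h
    funext a b
    have := Set.ext_iff.1 h (a, b)
    exact propext this

theorem fb_abundant {n s : ℕ} {cs : List ℕ} (h : fbCheck n s cs = true) :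
    IsAbundant (Set.Icc 1 n) (fishburnAlternating n) 6 s := by
  classical
  intro A hA hcard
  rw [fbCheck, Bool.and_eq_true, List.all_eq_true, List.all_eq_true] at h
  obtain ⟨hv, hc⟩ := h
  set l := (List.range' 1 n).filter (fun x => decide (x ∈ A)) with hl
  have hmem : ∀ x, x ∈ l ↔ x ∈ A := by
    intro x
    simp only [hl, List.mem_filter, List.mem_range'_1, decide_eq_true_eq]
    constructor
    · exact fun h => h.2
    · intro h
      have := hA h
      simp only [Set.mem_Icc] at this
      exact ⟨by omega, h⟩
  have hnd : l.Nodup := (List.nodup_range' (s := 1) (n := n)).filter _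
  have hlen : l.length = 6 := by
    rw [← List.toFinset_card_of_nodup hnd, ← Set.ncard_coe_finset, ← hcard]
    congr 1
    ext x
    simp [hmem]
  have h6 := hc l (List.mem_sublistsLen.2 ⟨List.filter_sublist, hlen⟩)
  have h6 := Nat.le_of_ble_eq_true h6
  obtain ⟨d1, d2⟩ := fbDistinct_spec (fbMask l) cs
  refine h6.trans ?_
  rw [← List.toFinset_card_of_nodup d1, ← Set.ncard_coe_finset]
  have d3 : ∀ x, ∃ c, x ∈ fbDistinct (fbMask l) cs → c ∈ cs ∧ x = c &&& fbMask l := by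
    intro x
    by_cases hx : x ∈ fbDistinct (fbMask l) cs
    · obtain ⟨c, hc⟩ := d2 x hx
      exact ⟨c, fun _ => hc⟩
    · exact ⟨0, fun h => absurd h hx⟩
  choose f hf using d3
  refine Set.ncard_le_ncard_of_injOn (fun x => restrictRel A (fbRel n (f x))) ?_ ?_
    (finite_restrict_s4 A hA _)
  · intro x hx
    have hx : x ∈ fbDistinct (fbMask l) cs := by simpa using hx
    exact ⟨_, fbRel_mem (hv _ (hf x hx).1), rfl⟩
  · intro x hx y hy hxy
    have hx : x ∈ fbDistinct (fbMask l) cs := by simpa using hx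
    have hy : y ∈ fbDistinct (fbMask l) cs := by simpa using hy
    rw [(hf x hx).2, (hf y hy).2]
    exact fb_restrict_inj (fun z hz => (hmem z).1 hz) hA hxy

def fbCodes6 : List ℕ :=
  [0, 1, 32, 33, 41, 57, 16384, 16385, 16416, 16417, 16425, 16441, 20512, 20513, 20521, 20537,
  20768, 20769, 20777, 20793, 21545, 21561, 21801, 21817, 21865, 21867, 21881, 21883, 23609,
  23865, 23929, 23931, 24057, 24059, 24063, 31801, 32057, 32121, 32123, 32249, 32251, 32255,
  32761, 32763, 32767]

def fbCodes7 : List ℕ :=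
  [0, 33, 16385, 16416, 20521, 21561, 540713, 544800, 544825, 675873, 677161, 678969, 687417,
  709945, 712057, 719929, 777595, 785785, 785915, 1048057, 1048575, 2096507, 2097145, 709673,
  2096639, 57, 31801, 540672, 676128, 709995, 777273, 777727, 1047865, 2096185, 16441, 547897,
  676137, 676921, 710011, 1048571, 540705, 709993, 711993, 720251, 777721, 785721, 2096505,
  2096635, 41, 20512, 21545, 23609, 556089, 675872, 675881, 676153, 785919, 1047609, 1047931,
  2097151, 1, 32, 20513, 712059]

def fbCodes8 : List ℕ :=
  [0, 16417, 134217769, 167792672, 167803961, 176705569, 176837689, 178937145, 183172409,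
  200015225, 200277499, 267124223, 268435449, 182475833, 20537, 178967913, 266894393,
  267386169, 134234112, 178977849, 183164283, 168317993, 200278015, 268434811, 199916601,
  168312864, 176836921, 176181289, 134239289, 183229497, 183238139, 267058553, 167788545,
  176708665, 176836640, 31801, 57, 178967931, 178279481, 178935081, 183229951, 267386875,
  268434489, 21545, 183008313, 267123769, 268434943, 134217761, 134234169, 168316985,
  176836896, 176848185, 266370105, 267386361, 134241337, 168312832, 178967849, 20512,
  176836649, 178967915, 176836897, 178969977, 176192569, 183229819, 168312889, 178945081,
  16425, 23609, 134217729, 134238241, 134249529, 199261241, 199949369, 20521, 21561, 176181280,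
  176182313, 176705568, 178803753, 183131449]

def fbCodes9 : List ℕ :=
  [0, 134234145, 17347661865, 21651018809, 22727384121, 23000153145, 23553834297, 25768492409,
  34358689275, 68719476735, 266370105, 22725415200, 23537122815, 68718067001, 17314086969,
  34359737401, 22995293225, 21643164729, 176181280, 22995983737, 21561, 25701646329,
  21642625025, 22747839545, 23084072315, 23537114491, 22725414969, 23620779065, 68718165049,
  17358158905, 167795769, 22727513385, 21643149344, 68719476089, 21651542049, 23537048633,
  25701383679, 16425, 17314103296, 22995981675, 25700629561, 22995948857, 68718428155, 31801,
  25768754687, 22725284905, 182475833, 21642629152, 23000177977, 34358427129, 25701645625,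
  134217729, 34359738363, 21657320505, 134238265, 17356053561, 22995827769, 167788544,
  178279481, 23016275001]

theorem fbCheck6 : fbCheck 6 45 fbCodes6 = true := by decide +kernel

theorem fbCheck7 : fbCheck 7 42 fbCodes7 = true := by decide +kernel

theorem fbCheck8 : fbCheck 8 39 fbCodes8 = true := by decide +kernel

theorem fbCheck9 : fbCheck 9 32 fbCodes9 = true := by decide +kernel


/-- Fishburn's alternating domain is `(6,45)`-abundant for `n = 6`, `(6,42)`-abundant
for `n = 7`, `(6,39)`-abundant for `n = 8`, and `(6,32)`-abundant for `n = 9`. -/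
theorem fishburn_six_abundance :
    IsAbundant (Set.Icc 1 6) (fishburnAlternating 6) 6 45 ∧
    IsAbundant (Set.Icc 1 7) (fishburnAlternating 7) 6 42 ∧
    IsAbundant (Set.Icc 1 8) (fishburnAlternating 8) 6 39 ∧
    IsAbundant (Set.Icc 1 9) (fishburnAlternating 9) 6 32 := by
  exact ⟨fb_abundant fbCheck6, fb_abundant fbCheck7, fb_abundant fbCheck8, fb_abundant fbCheck9⟩
end

section
/- Let A and B be disjoint nonempty finite sets, let D_1 be a nonempty domain on A and D_2 a nonempty domain on B, and let t be a positive integer. If D_1 and D_2 are each (k, 2^{k-1})-abundant for every k with 1 ≤ k ≤ t, then the domain S(D_1, D_2) on A ∪ B is (k, 2^{k-1})-abundant for every k with 1 ≤ k ≤ t. -/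
/-- The concatenation `uv` of an order `u` on `A` with an order `v` on `B`
(for disjoint `A`, `B`): every element of `A` is ranked above every element of `B`,
`A` is ordered by `u` and `B` by `v`. -/
def concatRel {α : Type*} (A B : Set α) (u v : α → α → Prop) : α → α → Prop :=
  fun a b => (a ∈ A ∧ b ∈ B) ∨ (a ∈ A ∧ b ∈ A ∧ u a b) ∨ (a ∈ B ∧ b ∈ B ∧ v a b)

/-- The domain `S(D₁,D₂)` on `A ∪ B`: all concatenations `uv` and `vu` for
`u ∈ D₁` and `v ∈ D₂`. -/
def sDomain {α : Type*} (A B : Set α) (D₁ D₂ : Set (α → α → Prop)) :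
    Set (α → α → Prop) :=
  { r | ∃ u ∈ D₁, ∃ v ∈ D₂, r = concatRel A B u v ∨ r = concatRel B A v u }

theorem restrictDom_fin {α : Type*} {C : Set α} (hC : C.Finite) (D : Set (α → α → Prop)) :
    (restrictDom C D).Finite := by
  have hf : (𝒫 (C ×ˢ C)).Finite := (hC.prod hC).finite_subsets
  refine Set.Finite.of_finite_image (f := fun r : α → α → Prop => {p : α × α | r p.1 p.2})
    (hf.subset ?_) ?_
  · rintro _ ⟨_, ⟨r, _, rfl⟩, rfl⟩ p hp
    exact ⟨hp.1, hp.2.1⟩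
  · intro r _ s _ h
    funext a b
    have := Set.ext_iff.1 h (a, b)
    exact propext this

theorem restrict_concat {α : Type*} (A B C : Set α) (u v : α → α → Prop) :
    restrictRel C (concatRel A B u v) =
      concatRel (C ∩ A) (C ∩ B) (restrictRel (C ∩ A) u) (restrictRel (C ∩ B) v) := by
  funext a b
  simp only [restrictRel, concatRel, Set.mem_inter_iff, eq_iff_iff]
  tauto

theorem concat_inj {α : Type*} {A B : Set α} (h : Disjoint A B) {D E : Set (α → α → Prop)} :
    Set.InjOn (fun p : (α → α → Prop) × (α → α → Prop) => concatRel A B p.1 p.2)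
      (restrictDom A D ×ˢ restrictDom B E) := by
  rintro ⟨_, _⟩ ⟨⟨u, _, rfl⟩, ⟨v, _, rfl⟩⟩ ⟨_, _⟩ ⟨⟨u', _, rfl⟩, ⟨v', _, rfl⟩⟩ he
  have hd : ∀ x, x ∈ A → x ∈ B → False := fun _ hx hy => Set.disjoint_left.1 h hx hy
  have key : ∀ a b, _ := fun a b => iff_of_eq (congrFun (congrFun he a) b)
  simp only [restrictRel, concatRel] at key
  refine Prod.ext ?_ ?_
  · funext a b
    by_cases ha : a ∈ A
    · by_cases hb : b ∈ A
      · have ha' : a ∉ B := hd a ha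
        have hb' : b ∉ B := hd b hb
        have := key a b
        simp only [ha, hb, ha', hb', true_and, false_and, and_false, false_or, or_false] at this
        simp only [restrictRel, this]
      · simp only [restrictRel, hb, false_and, and_false]
    · simp only [restrictRel, ha, false_and]
  · funext a b
    by_cases ha : a ∈ B
    · by_cases hb : b ∈ B
      · have ha' : a ∉ A := fun h => hd a h ha
        have hb' : b ∉ A := fun h => hd b h hb
        have := key a b
        simp only [ha, hb, ha', hb', true_and, false_and, and_false, false_or, or_false] at this
        simp only [restrictRel, this]
      · simp only [restrictRel, hb, false_and, and_false]
    · simp only [restrictRel, ha, false_and]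

theorem concat_ncard {α : Type*} {A B : Set α} (h : Disjoint A B) (D E : Set (α → α → Prop)) :
    ((fun p : (α → α → Prop) × (α → α → Prop) => concatRel A B p.1 p.2) ''
      (restrictDom A D ×ˢ restrictDom B E)).ncard
      = (restrictDom A D).ncard * (restrictDom B E).ncard := by
  rw [Set.ncard_image_of_injOn (concat_inj h), Set.ncard_prod]

theorem concat_left {α : Type*} {A B C : Set α} (h : Disjoint A B) (hC : C ⊆ A)
    (u v : α → α → Prop) : restrictRel C (concatRel A B u v) = restrictRel C u := by
  have hd : ∀ x, x ∈ A → x ∈ B → False := fun _ hx hy => Set.disjoint_left.1 h hx hy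
  funext a b
  have := hd a
  have := hd b
  have := @hC a
  have := @hC b
  simp only [restrictRel, concatRel, eq_iff_iff]
  tauto

theorem sDomain_comm {α : Type*} (A B : Set α) (D E : Set (α → α → Prop)) :
    sDomain A B D E = sDomain B A E D := by
  ext r
  constructor <;> rintro ⟨u, hu, v, hv, h⟩ <;> exact ⟨v, hv, u, hu, h.symm⟩

theorem restrict_left {α : Type*} {A B C : Set α} (h : Disjoint A B) (hC : C ⊆ A)
    (D E : Set (α → α → Prop)) (hE : E.Nonempty) :
    restrictDom C D ⊆ restrictDom C (sDomain A B D E) := by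
  obtain ⟨v, hv⟩ := hE
  rintro _ ⟨u, hu, rfl⟩
  exact ⟨_, ⟨u, hu, v, hv, Or.inl rfl⟩, concat_left h hC u v⟩

/-- If `D₁` and `D₂` are nonempty domains on disjoint nonempty finite sets `A` and `B`
which are `(k, 2^(k-1))`-abundant for every `1 ≤ k ≤ t`, then so is `S(D₁,D₂)`
on `A ∪ B`. -/
theorem sDomain_abundant {α : Type*} (A B : Set α)
    (hAfin : A.Finite) (hBfin : B.Finite) (hA : A.Nonempty) (hB : B.Nonempty)
    (hdisj : Disjoint A B) (D₁ D₂ : Set (α → α → Prop))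
    (hD₁ : IsDomainOn A D₁) (hD₂ : IsDomainOn B D₂)
    (hD₁ne : D₁.Nonempty) (hD₂ne : D₂.Nonempty)
    (t : ℕ) (ht : 1 ≤ t)
    (h₁ : ∀ k : ℕ, 1 ≤ k → k ≤ t → IsAbundant A D₁ k (2 ^ (k - 1)))
    (h₂ : ∀ k : ℕ, 1 ≤ k → k ≤ t → IsAbundant B D₂ k (2 ^ (k - 1))) :
    ∀ k : ℕ, 1 ≤ k → k ≤ t → IsAbundant (A ∪ B) (sDomain A B D₁ D₂) k (2 ^ (k - 1)) := by
  intro k hk hkt C hC hCk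
  have hCf : C.Finite := (hAfin.union hBfin).subset hC
  have hfin := restrictDom_fin hCf (sDomain A B D₁ D₂)
  rcases Set.eq_empty_or_nonempty (C ∩ B) with hb | hb
  · have hCA : C ⊆ A := fun x hx => (hC hx).resolve_right
      fun hxB => (Set.ext_iff.1 hb x).1 ⟨hx, hxB⟩
    exact (h₁ k hk hkt C hCA hCk).trans
      (Set.ncard_le_ncard (restrict_left hdisj hCA D₁ D₂ hD₂ne) hfin)
  rcases Set.eq_empty_or_nonempty (C ∩ A) with ha | ha
  · have hCB : C ⊆ B := fun x hx => (hC hx).resolve_left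
      fun hxA => (Set.ext_iff.1 ha x).1 ⟨hx, hxA⟩
    refine (h₂ k hk hkt C hCB hCk).trans (Set.ncard_le_ncard ?_ hfin)
    rw [sDomain_comm]
    exact restrict_left hdisj.symm hCB D₂ D₁ hD₁ne
  have hd : Disjoint (C ∩ A) (C ∩ B) := hdisj.mono Set.inter_subset_right Set.inter_subset_right
  have hAf : (C ∩ A).Finite := hCf.subset Set.inter_subset_left
  have hBf : (C ∩ B).Finite := hCf.subset Set.inter_subset_left
  have hsum : (C ∩ A).ncard + (C ∩ B).ncard = k := by
    rw [← Set.ncard_union_eq hd hAf hBf, ← Set.inter_union_distrib_left,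
      Set.inter_eq_left.2 hC, hCk]
  have hi : 0 < (C ∩ A).ncard := (Set.ncard_pos hAf).2 ha
  have hj : 0 < (C ∩ B).ncard := (Set.ncard_pos hBf).2 hb
  have e₁ := h₁ _ hi (by omega) (C ∩ A) Set.inter_subset_right rfl
  have e₂ := h₂ _ hj (by omega) (C ∩ B) Set.inter_subset_right rfl
  have n₁ := concat_ncard hd D₁ D₂
  have n₂ := concat_ncard hd.symm D₂ D₁
  have f₁ := ((restrictDom_fin hAf D₁).prod (restrictDom_fin hBf D₂)).image
    (fun p : (α → α → Prop) × (α → α → Prop) => concatRel (C ∩ A) (C ∩ B) p.1 p.2)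
  have f₂ := ((restrictDom_fin hBf D₂).prod (restrictDom_fin hAf D₁)).image
    (fun p : (α → α → Prop) × (α → α → Prop) => concatRel (C ∩ B) (C ∩ A) p.1 p.2)
  generalize hS₁ : (fun p : (α → α → Prop) × (α → α → Prop) =>
    concatRel (C ∩ A) (C ∩ B) p.1 p.2) '' _ = S₁ at n₁ f₁
  generalize hS₂ : (fun p : (α → α → Prop) × (α → α → Prop) =>
    concatRel (C ∩ B) (C ∩ A) p.1 p.2) '' _ = S₂ at n₂ f₂
  have hdS : Disjoint S₁ S₂ := by
    rw [Set.disjoint_left]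
    subst hS₁ hS₂
    rintro _ ⟨⟨p, q⟩, _, rfl⟩ ⟨⟨p', q'⟩, _, he⟩
    obtain ⟨a, ha⟩ := ha
    obtain ⟨b, hb⟩ := hb
    have ha' : a ∉ C ∩ B := Set.disjoint_left.1 hd ha
    have hb' : b ∉ C ∩ A := Set.disjoint_right.1 hd hb
    have := iff_of_eq (congrFun (congrFun he a) b)
    simp only [concatRel] at this
    tauto
  have hsub : S₁ ∪ S₂ ⊆ restrictDom C (sDomain A B D₁ D₂) := by
    subst hS₁ hS₂
    rintro _ (⟨⟨_, _⟩, ⟨⟨u, hu, rfl⟩, ⟨v, hv, rfl⟩⟩, rfl⟩ | ⟨⟨_, _⟩, ⟨⟨v, hv, rfl⟩, ⟨u, hu, rfl⟩⟩, rfl⟩)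
    · exact ⟨_, ⟨u, hu, v, hv, Or.inl rfl⟩, restrict_concat A B C u v⟩
    · exact ⟨_, ⟨u, hu, v, hv, Or.inr rfl⟩, restrict_concat B A C v u⟩
  have hle := Set.ncard_le_ncard hsub hfin
  rw [Set.ncard_union_eq hdS f₁ f₂, n₁, n₂] at hle
  refine le_trans ?_ hle
  have hm := Nat.mul_le_mul e₁ e₂
  have hp : 2 ^ (k - 1) = 2 * (2 ^ ((C ∩ A).ncard - 1) * 2 ^ ((C ∩ B).ncard - 1)) := by
    rw [← pow_add, ← pow_succ']
    congr 1
    omega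
  rw [hp, Nat.mul_comm (restrictDom (C ∩ B) D₂).ncard]
  omega
end

section
/- The four linear orders on {1,…,8} given (from most preferred to least preferred) by P1 = 1,2,3,4,5,6,7,8; P2 = 4,3,2,1,8,7,6,5; P3 = 6,5,8,7,2,1,4,3; P4 = 7,8,5,6,3,4,1,2 form a domain of size 4 that is (3,4)-abundant: for every 3-element subset T of {1,…,8}, the four orders induce four pairwise distinct linear orders on T. Moreover, the domain {P1, P2, P3} of size 3 is (3,3)-abundant: for every 3-element subset T, these three orders induce three pairwise distinct linear orders on T. -/
/-- The linear order encoded by a duplicate-free list `l` (most preferred first):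
`a` is ranked above `b` iff `a` occurs strictly before `b` in `l`. -/
def listRel (l : List ℕ) : ℕ → ℕ → Prop :=
  fun a b => ∃ i j : Fin l.length, (i : ℕ) < (j : ℕ) ∧ l.get i = a ∧ l.get j = b

instance listRelDecidable (l : List ℕ) (a b : ℕ) : Decidable (listRel l a b) := by
  unfold listRel; infer_instance

/-- The restrictions to each triple of the two orders differ on some pair of the triple. -/
def TripleSep (l m : List ℕ) : Prop :=
  ∀ a ∈ Finset.Icc 1 8, ∀ b ∈ Finset.Icc 1 8, a ≠ b → ∀ c ∈ Finset.Icc 1 8,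
    a ≠ c → b ≠ c →
    ¬ (listRel l a b ↔ listRel m a b) ∨ ¬ (listRel l a c ↔ listRel m a c) ∨
      ¬ (listRel l b c ↔ listRel m b c)

instance sepDecidable (l m : List ℕ) : Decidable (TripleSep l m) := by
  unfold TripleSep; infer_instance

theorem TripleSep.ne {l m : List ℕ} (h : TripleSep l m) {A : Set ℕ} (hA : A ⊆ Set.Icc 1 8)
    (h3 : A.ncard = 3) : restrictRel A (listRel l) ≠ restrictRel A (listRel m) := by
  obtain ⟨a, b, c, hab, hac, hbc, rfl⟩ := Set.ncard_eq_three.mp h3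
  intro he
  have key : ∀ x ∈ ({a, b, c} : Set ℕ), ∀ y ∈ ({a, b, c} : Set ℕ),
      (listRel l x y ↔ listRel m x y) := by
    intro x hx y hy
    have := congrFun (congrFun he x) y
    simpa only [restrictRel, hx, hy, true_and, eq_iff_iff] using this
  have ha : a ∈ ({a, b, c} : Set ℕ) := by simp
  have hb : b ∈ ({a, b, c} : Set ℕ) := by simp
  have hc : c ∈ ({a, b, c} : Set ℕ) := by simp
  rcases h a (Finset.mem_Icc.mpr (hA ha)) b (Finset.mem_Icc.mpr (hA hb)) hab c
    (Finset.mem_Icc.mpr (hA hc)) hac hbc with h | h | h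
  · exact h (key _ ha _ hb)
  · exact h (key _ ha _ hc)
  · exact h (key _ hb _ hc)

theorem TripleSep.ne' {l m : List ℕ} (h : TripleSep l m) : listRel l ≠ listRel m := by
  intro he
  refine h.ne (A := {1, 2, 3}) ?_ ?_ (by rw [he])
  · rintro x (rfl | rfl | rfl) <;> simp
  · exact Set.ncard_eq_three.mpr ⟨1, 2, 3, by simp, by simp, by simp, rfl⟩

theorem ncard_three' {β : Type*} {a b c : β} (hab : a ≠ b) (hac : a ≠ c) (hbc : b ≠ c) :
    ({a, b, c} : Set β).ncard = 3 :=
  Set.ncard_eq_three.mpr ⟨a, b, c, hab, hac, hbc, rfl⟩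

theorem ncard_four' {β : Type*} {a b c d : β} (hab : a ≠ b) (hac : a ≠ c) (had : a ≠ d)
    (hbc : b ≠ c) (hbd : b ≠ d) (hcd : c ≠ d) :
    ({a, b, c, d} : Set β).ncard = 4 := by
  rw [Set.ncard_insert_of_notMem (by simp [hab, hac, had]), ncard_three' hbc hbd hcd]

/-- The domain on `{1,…,8}` consisting of the four orders
`12345678`, `43218765`, `65872143`, `78563412` has size 4 and is `(3,4)`-abundant,
and its first three orders form a domain of size 3 which is `(3,3)`-abundant. -/
theorem small_abundant_domains :
    ({listRel [1,2,3,4,5,6,7,8], listRel [4,3,2,1,8,7,6,5],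
      listRel [6,5,8,7,2,1,4,3], listRel [7,8,5,6,3,4,1,2]} :
        Set (ℕ → ℕ → Prop)).ncard = 4 ∧
    IsAbundant (Set.Icc 1 8)
      {listRel [1,2,3,4,5,6,7,8], listRel [4,3,2,1,8,7,6,5],
       listRel [6,5,8,7,2,1,4,3], listRel [7,8,5,6,3,4,1,2]} 3 4 ∧
    ({listRel [1,2,3,4,5,6,7,8], listRel [4,3,2,1,8,7,6,5],
      listRel [6,5,8,7,2,1,4,3]} : Set (ℕ → ℕ → Prop)).ncard = 3 ∧
    IsAbundant (Set.Icc 1 8)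
      {listRel [1,2,3,4,5,6,7,8], listRel [4,3,2,1,8,7,6,5],
       listRel [6,5,8,7,2,1,4,3]} 3 3 := by
  have h12 : TripleSep [1,2,3,4,5,6,7,8] [4,3,2,1,8,7,6,5] := by decide +kernel
  have h13 : TripleSep [1,2,3,4,5,6,7,8] [6,5,8,7,2,1,4,3] := by decide +kernel
  have h14 : TripleSep [1,2,3,4,5,6,7,8] [7,8,5,6,3,4,1,2] := by decide +kernel
  have h23 : TripleSep [4,3,2,1,8,7,6,5] [6,5,8,7,2,1,4,3] := by decide +kernel
  have h24 : TripleSep [4,3,2,1,8,7,6,5] [7,8,5,6,3,4,1,2] := by decide +kernel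
  have h34 : TripleSep [6,5,8,7,2,1,4,3] [7,8,5,6,3,4,1,2] := by decide +kernel
  refine ⟨ncard_four' h12.ne' h13.ne' h14.ne' h23.ne' h24.ne' h34.ne', ?_, ncard_three' h12.ne' h13.ne' h23.ne', ?_⟩
  · intro A hA h3
    simp only [restrictDom, Set.image_insert_eq, Set.image_singleton]
    exact (ncard_four' (h12.ne hA h3) (h13.ne hA h3) (h14.ne hA h3) (h23.ne hA h3) (h24.ne hA h3) (h34.ne hA h3)).ge
  · intro A hA h3
    simp only [restrictDom, Set.image_insert_eq, Set.image_singleton]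
    exact (ncard_three' (h12.ne hA h3) (h13.ne hA h3) (h23.ne hA h3)).ge
end

section
/- There is no Condorcet domain D on a 9-element set with |D| = 3 that is (3,3)-abundant, and there is no Condorcet domain D on a 9-element set with |D| = 4 that is (3,4)-abundant. Equivalently, for any three (respectively four) linear orders on 9 alternatives forming a Condorcet domain, there exists a 3-element subset on which at least two of the orders induce the same linear order. -/
/-- The number of orders in the profile `R` that rank `a` above `b`. -/
noncomputable def majCount {α : Type*} (R : List (α → α → Prop)) (a b : α) : ℕ :=
  Nat.card {i : Fin R.length // (R.get i) a b}

/-- More than half of the orders in the profile `R` rank `a` above `b`. -/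
def MajPrefers {α : Type*} (R : List (α → α → Prop)) (a b : α) : Prop :=
  R.length < 2 * majCount R a b

/-- `D` is a Condorcet domain on `X`: it is a domain on `X` and for every profile
(list of orders from `D`) of odd length, the majority relation is transitive on `X`. -/
def IsCondorcetDomain {α : Type*} (X : Set α) (D : Set (α → α → Prop)) : Prop :=
  IsDomainOn X D ∧
  ∀ R : List (α → α → Prop), (∀ r ∈ R, r ∈ D) → Odd R.length →
    ∀ a ∈ X, ∀ b ∈ X, ∀ c ∈ X,
      MajPrefers R a b → MajPrefers R b c → MajPrefers R a c

/-- A maximal Condorcet domain on `X`. -/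
def IsMaximalCondorcetDomain {α : Type*} (X : Set α) (D : Set (α → α → Prop)) : Prop :=
  IsCondorcetDomain X D ∧
  ∀ D' : Set (α → α → Prop), D ⊆ D' → IsCondorcetDomain X D' → D' = D

theorem aux_restrict_eq {α : Type*} {X : Set α} {r s : α → α → Prop}
    (hr : IsLinearOrderOn X r) (hs : IsLinearOrderOn X s) {x y z : α}
    (h1 : r z y) (h2 : r y x) (h3 : s z y) (h4 : s y x) :
    restrictRel {x, y, z} r = restrictRel {x, y, z} s := by
  obtain ⟨r1, r2, r3, -⟩ := hr
  obtain ⟨s1, s2, s3, -⟩ := hs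
  have hz := (r1 _ _ h1).1
  have hy := (r1 _ _ h1).2
  have hx := (r1 _ _ h2).2
  have h5 := r3 z hz y hy x hx h1 h2
  have h6 := s3 z hz y hy x hx h3 h4
  have rx := r2 x hx
  have ry := r2 y hy
  have rz := r2 z hz
  have sx := s2 x hx
  have sy := s2 y hy
  have sz := s2 z hz
  have a1 : ¬ r y z := fun h => ry (r3 y hy z hz y hy h h1)
  have a2 : ¬ r x y := fun h => rx (r3 x hx y hy x hx h h2)
  have a3 : ¬ r x z := fun h => rx (r3 x hx z hz x hx h h5)
  have b1 : ¬ s y z := fun h => sy (s3 y hy z hz y hy h h3)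
  have b2 : ¬ s x y := fun h => sx (s3 x hx y hy x hx h h4)
  have b3 : ¬ s x z := fun h => sx (s3 x hx z hz x hx h h6)
  funext a b
  apply propext
  unfold restrictRel
  refine and_congr_right fun ha => and_congr_right fun hb => ?_
  simp only [Set.mem_insert_iff, Set.mem_singleton_iff] at ha hb
  rcases ha with rfl | rfl | rfl <;> rcases hb with rfl | rfl | rfl <;> simp_all

theorem aux_no_chain {α : Type*} {X : Set α} {D : Set (α → α → Prop)} (hD : IsDomainOn X D)
    (hfin : D.Finite) (hab : IsAbundant X D 3 D.ncard) {r s : α → α → Prop}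
    (hr : r ∈ D) (hs : s ∈ D) (hne : r ≠ s) {x y z : α}
    (h1 : r z y) (h2 : r y x) (h3 : s z y) (h4 : s y x) : False := by
  have e := aux_restrict_eq (hD r hr) (hD s hs) h1 h2 h3 h4
  obtain ⟨r1, r2, r3, -⟩ := hD r hr
  have hz := (r1 _ _ h1).1
  have hy := (r1 _ _ h1).2
  have hx := (r1 _ _ h2).2
  have n1 : x ≠ y := by rintro rfl; exact r2 _ hx h2
  have n2 : y ≠ z := by rintro rfl; exact r2 _ hy h1
  have n3 : x ≠ z := by rintro rfl; exact r2 _ hx (r3 _ hx _ hy _ hx h1 h2)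
  have hc := hab {x, y, z} (by
    intro a ha
    simp only [Set.mem_insert_iff, Set.mem_singleton_iff] at ha
    rcases ha with rfl | rfl | rfl <;> assumption) (Set.ncard_eq_three.2 ⟨x, y, z, n1, n3, n2, rfl⟩)
  have hi : Set.InjOn (restrictRel {x, y, z}) D :=
    (Set.ncard_image_iff hfin).1 (le_antisymm (Set.ncard_image_le hfin) hc)
  exact hne (hi hr hs e)

theorem aux_main {α : Type*} {X : Set α} (hXcard : X.ncard = 9) {D : Set (α → α → Prop)}
    (hD : IsDomainOn X D) (h3 : 2 < D.ncard) : ¬ IsAbundant X D 3 D.ncard := by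
  intro hab
  have hfin : D.Finite := Set.finite_of_ncard_pos (by omega)
  obtain ⟨r, s, t, hr, hs, ht, hrs, hrt, hst⟩ := (Set.two_lt_ncard_iff hfin).1 h3
  let f : α → Prop × Prop × Prop := fun x =>
    (∃ y, r y x ∧ s y x, ∃ y, r y x ∧ t y x, ∃ y, s y x ∧ t y x)
  have key : ∀ x y, f x = f y →
      ¬ (r y x ∧ s y x) ∧ ¬ (r y x ∧ t y x) ∧ ¬ (s y x ∧ t y x) := by
    intro x y hf
    simp only [f, Prod.mk.injEq, eq_iff_iff] at hf
    obtain ⟨f1, f2, f3⟩ := hf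
    refine ⟨fun h => ?_, fun h => ?_, fun h => ?_⟩
    · obtain ⟨z, hz⟩ := f1.1 ⟨y, h⟩
      exact aux_no_chain hD hfin hab hr hs hrs hz.1 h.1 hz.2 h.2
    · obtain ⟨z, hz⟩ := f2.1 ⟨y, h⟩
      exact aux_no_chain hD hfin hab hr ht hrt hz.1 h.1 hz.2 h.2
    · obtain ⟨z, hz⟩ := f3.1 ⟨y, h⟩
      exact aux_no_chain hD hfin hab hs ht hst hz.1 h.1 hz.2 h.2
  have hcard : (Set.univ : Set (Prop × Prop × Prop)).ncard < X.ncard := by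
    rw [hXcard, Set.ncard_univ, Nat.card_eq_fintype_card]
    simp
  obtain ⟨x, hx, y, hy, hxy, he⟩ :=
    Set.exists_ne_map_eq_of_ncard_lt_of_maps_to hcard (f := f) (fun _ _ => Set.mem_univ _)
  have k1 := key x y he
  have k2 := key y x he.symm
  have t1 := (hD r hr).2.2.2 x hx y hy hxy
  have t2 := (hD s hs).2.2.2 x hx y hy hxy
  have t3 := (hD t ht).2.2.2 x hx y hy hxy
  tauto

theorem no_small_abundant_condorcet_on_nine {α : Type*} (X : Set α)
    (hX : X.Finite) (hXcard : X.ncard = 9)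
    (D : Set (α → α → Prop)) (hD : IsCondorcetDomain X D) :
    (D.ncard = 3 → ¬ IsAbundant X D 3 3) ∧ (D.ncard = 4 → ¬ IsAbundant X D 3 4) := by
  refine ⟨fun h => ?_, fun h => ?_⟩
  · have := aux_main hXcard hD.1 (by omega)
    rwa [h] at this
  · have := aux_main hXcard hD.1 (by omega)
    rwa [h] at this
end

section
/- Let D be the domain on {1,…,6} consisting of the four linear orders (from most preferred to least preferred) P1 = 1,2,3,4,5,6; P2 = 3,6,2,5,1,4; P3 = 4,1,5,2,6,3; P4 = 6,5,4,3,2,1. Then D is a maximal Condorcet domain on {1,…,6}, and for every 5-element subset A ⊆ {1,…,6} the restriction of D to A consists of exactly 4 distinct orders and is NOT a maximal Condorcet domain on A (i.e., there exists a linear order on A not in the restriction whose addition still yields a Condorcet domain). In particular, D is a discordant Condorcet domain. -/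
def bef : List ℕ → ℕ → ℕ → Bool
  | [], _, _ => false
  | x :: t, a, b => (x == a && t.contains b) || bef t a b

theorem listRel_iff (l : List ℕ) (a b : ℕ) : listRel l a b ↔ bef l a b = true := by
  induction l with
  | nil => simp [listRel, bef]
  | cons x t ih =>
    have h : listRel (x :: t) a b ↔ (x = a ∧ b ∈ t) ∨ listRel t a b := by
      unfold listRel
      constructor
      · rintro ⟨⟨i, hi⟩, ⟨j, hj⟩, hij, h1, h2⟩
        cases i with
        | zero =>
          cases j with
          | zero => simp at hij
          | succ j =>
            left
            simp at h1 h2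
            exact ⟨h1, h2 ▸ List.getElem_mem _⟩
        | succ i =>
          cases j with
          | zero => simp at hij
          | succ j =>
            right
            simp at h1 h2 hi hj hij
            exact ⟨⟨i, hi⟩, ⟨j, hj⟩, by simpa using hij, by simpa using h1, by simpa using h2⟩
      · rintro (⟨h1, h2⟩ | ⟨i, j, hij, h1, h2⟩)
        · obtain ⟨j, hj, h⟩ := List.getElem_of_mem h2
          exact ⟨⟨0, by simp⟩, ⟨j + 1, by simpa using hj⟩, by simp, by simpa using h1,
            by simpa using h⟩
        · exact ⟨i.succ, j.succ, by simpa using hij, by simpa using h1, by simpa using h2⟩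
    rw [h, ih]
    simp [bef]

theorem bef_mem {l : List ℕ} {a b : ℕ} (h : bef l a b = true) : a ∈ l ∧ b ∈ l := by
  induction l with
  | nil => simp [bef] at h
  | cons x t ih =>
    simp [bef] at h
    grind

theorem bef_filter (X l : List ℕ) (a b : ℕ) :
    bef (l.filter (fun x => X.contains x)) a b = true ↔ a ∈ X ∧ b ∈ X ∧ bef l a b = true := by
  induction l with
  | nil => simp [bef]
  | cons x t ih =>
    by_cases hx : x ∈ X
    · rw [List.filter_cons_of_pos (by simpa using hx)]
      simp only [bef, Bool.or_eq_true, ih]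
      simp
      grind
    · rw [List.filter_cons_of_neg (by simpa using hx)]
      simp only [bef, Bool.or_eq_true, ih]
      simp
      grind

/-- set of members of a list -/
def sx (X : List ℕ) : Set ℕ := {x | x ∈ X}

/-- the domain coded by a list of lists -/
def dom (L : List (List ℕ)) : Set (ℕ → ℕ → Prop) := listRel '' {l | l ∈ L}

theorem restrict_dom (X : List ℕ) (L : List (List ℕ)) :
    restrictDom (sx X) (dom L) = dom (L.map (fun l => l.filter (fun x => X.contains x))) := by
  have h : ∀ l, restrictRel (sx X) (listRel l) = listRel (l.filter (fun x => X.contains x)) := by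
    intro l
    funext a b
    simp only [restrictRel, listRel_iff, bef_filter, sx, Set.mem_setOf_eq]
  ext r
  simp [restrictDom, dom, h]

def Cyc (p q r : ℕ → ℕ → Prop) (a b c : ℕ) : Prop :=
  p a b ∧ p b c ∧ q b c ∧ q c a ∧ r c a ∧ r a b

theorem maj_inter {R : List (ℕ → ℕ → Prop)} {a b c d : ℕ} (h1 : MajPrefers R a b)
    (h2 : MajPrefers R c d) : ∃ r ∈ R, r a b ∧ r c d := by
  classical
  unfold MajPrefers majCount at h1 h2
  rw [Nat.card_eq_fintype_card, Fintype.card_subtype] at h1 h2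
  by_contra hn
  push Not at hn
  have hd : Disjoint (Finset.univ.filter (fun i : Fin R.length => R.get i a b))
      (Finset.univ.filter (fun i : Fin R.length => R.get i c d)) := by
    rw [Finset.disjoint_filter]
    intro i _ hi
    exact hn _ (List.get_mem _ _) hi
  have := Finset.card_le_univ (Finset.disjUnion _ _ hd)
  rw [Finset.card_disjUnion, Fintype.card_fin] at this
  omega

theorem maj_total {X : Set ℕ} {R : List (ℕ → ℕ → Prop)} (hR : ∀ r ∈ R, IsLinearOrderOn X r)
    (ho : Odd R.length) {a b : ℕ} (ha : a ∈ X) (hb : b ∈ X) (hab : a ≠ b)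
    (h : ¬ MajPrefers R a b) : MajPrefers R b a := by
  classical
  unfold MajPrefers majCount at *
  rw [Nat.card_eq_fintype_card, Fintype.card_subtype] at *
  have : (Finset.univ : Finset (Fin R.length)) ⊆
    (Finset.univ.filter (fun i : Fin R.length => R.get i a b)) ∪
      (Finset.univ.filter (fun i : Fin R.length => R.get i b a)) := by
    intro i _
    have := (hR _ (List.get_mem R i)).2.2.2 a ha b hb hab
    simpa using this
  have h3 := (Finset.card_le_card this).trans (Finset.card_union_le _ _)
  rw [Finset.card_univ, Fintype.card_fin] at h3
  obtain ⟨k, hk⟩ := ho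
  omega

theorem condorcet_of {X : Set ℕ} {D : Set (ℕ → ℕ → Prop)} (hD : IsDomainOn X D)
    (h : ∀ a ∈ X, ∀ b ∈ X, ∀ c ∈ X, ∀ p ∈ D, ∀ q ∈ D, ∀ r ∈ D, ¬ Cyc p q r a b c) :
    IsCondorcetDomain X D := by
  refine ⟨hD, ?_⟩
  intro R hR ho a ha b hb c hc h1 h2
  have hR' : ∀ r ∈ R, IsLinearOrderOn X r := fun r hr => hD r (hR r hr)
  by_contra h3
  have hac : a ≠ c := by
    rintro rfl
    obtain ⟨r, hr, x, y⟩ := maj_inter h1 h2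
    exact (hR' r hr).2.1 a ha ((hR' r hr).2.2.1 a ha b hb a ha x y)
  have h4 := maj_total hR' ho ha hc hac h3
  obtain ⟨p, hp, p1, p2⟩ := maj_inter h1 h2
  obtain ⟨q, hq, q1, q2⟩ := maj_inter h2 h4
  obtain ⟨r, hr, r1, r2⟩ := maj_inter h4 h1
  exact h a ha b hb c hc p (hR p hp) q (hR q hq) r (hR r hr) ⟨p1, p2, q1, q2, r1, r2⟩

theorem maj3 {p q r : ℕ → ℕ → Prop} {a b : ℕ} :
    MajPrefers [p, q, r] a b ↔ (p a b ∧ q a b) ∨ (p a b ∧ r a b) ∨ (q a b ∧ r a b) := by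
  classical
  unfold MajPrefers majCount
  rw [Nat.card_eq_fintype_card, Fintype.card_subtype]
  have : (Finset.univ.filter (fun i : Fin [p, q, r].length => [p, q, r].get i a b)).card
      = (if p a b then 1 else 0) + (if q a b then 1 else 0) + (if r a b then 1 else 0) := by
    rw [Finset.card_filter]
    exact Fin.sum_univ_three (fun i : Fin 3 => if [p, q, r].get i a b then 1 else 0)
  rw [this]
  by_cases h1 : p a b <;> by_cases h2 : q a b <;> by_cases h3 : r a b <;> simp [h1, h2, h3]

theorem not_cyc {X : Set ℕ} {D : Set (ℕ → ℕ → Prop)} (hD : IsCondorcetDomain X D)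
    {a b c : ℕ} (ha : a ∈ X) (hb : b ∈ X) (hc : c ∈ X) {p q r : ℕ → ℕ → Prop}
    (hp : p ∈ D) (hq : q ∈ D) (hr : r ∈ D) : ¬ Cyc p q r a b c := by
  rintro ⟨p1, p2, q1, q2, r1, r2⟩
  have := hD.2 [p, q, r] (by simp [hp, hq, hr]) ⟨1, rfl⟩ a ha b hb c hc
    (maj3.2 (by tauto)) (maj3.2 (by tauto))
  rw [maj3] at this
  have key : ∀ s ∈ D, s a c → s c a → False := fun s hs x y =>
    (hD.1 s hs).2.1 a ha ((hD.1 s hs).2.2.1 a ha c hc a ha x y)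
  have := key q hq
  have := key r hr
  tauto

def chkLin (X l : List ℕ) : Prop :=
  (∀ a ∈ l, a ∈ X) ∧ (∀ a ∈ X, ¬ bef l a a = true) ∧
  (∀ a ∈ X, ∀ b ∈ X, bef l a b = true → ∀ c ∈ X, bef l b c = true → bef l a c = true) ∧
  (∀ a ∈ X, ∀ b ∈ X, a ≠ b → bef l a b = true ∨ bef l b a = true)

instance (X l : List ℕ) : Decidable (chkLin X l) := by unfold chkLin; infer_instance

theorem lin_of {X l : List ℕ} (h : chkLin X l) : IsLinearOrderOn (sx X) (listRel l) := by
  obtain ⟨h1, h2, h3, h4⟩ := h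
  simp only [IsLinearOrderOn, listRel_iff, sx, Set.mem_setOf_eq]
  refine ⟨?_, h2, ?_, h4⟩
  · intro a b hab
    exact ⟨h1 _ (bef_mem hab).1, h1 _ (bef_mem hab).2⟩
  · intro a ha b hb c hc x y
    exact h3 a ha b hb x c hc y

def chkC (X : List ℕ) (L : List (List ℕ)) : Prop :=
  (∀ l ∈ L, chkLin X l) ∧
  (∀ a ∈ X, ∀ b ∈ X, ∀ c ∈ X, ∀ p ∈ L, bef p a b = true → bef p b c = true →
    ∀ q ∈ L, bef q b c = true → bef q c a = true →
    ∀ r ∈ L, bef r c a = true → ¬ bef r a b = true)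

instance (X : List ℕ) (L : List (List ℕ)) : Decidable (chkC X L) := by
  unfold chkC; infer_instance

theorem condorcet_dom {X : List ℕ} {L : List (List ℕ)} (h : chkC X L) :
    IsCondorcetDomain (sx X) (dom L) := by
  apply condorcet_of
  · rintro _ ⟨l, hl, rfl⟩
    exact lin_of (h.1 l hl)
  · rintro a ha b hb c hc _ ⟨p, hp, rfl⟩ _ ⟨q, hq, rfl⟩ _ ⟨r, hr, rfl⟩ ⟨h1, h2, h3, h4, h5, h6⟩
    rw [listRel_iff] at *
    exact h.2 a ha b hb c hc p hp h1 h2 q hq h3 h4 r hr h5 h6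

def chkD (X : List ℕ) (L : List (List ℕ)) : Prop :=
  ∀ l ∈ L, ∀ m ∈ L, l ≠ m → ∃ a ∈ X, ∃ b ∈ X, bef l a b = true ∧ ¬ bef m a b = true

instance (X : List ℕ) (L : List (List ℕ)) : Decidable (chkD X L) := by
  unfold chkD; infer_instance

theorem inj_of {X : List ℕ} {L : List (List ℕ)} (h : chkD X L) :
    Set.InjOn listRel {l | l ∈ L} := by
  intro l hl m hm e
  by_contra hne
  obtain ⟨a, _, b, _, h1, h2⟩ := h l hl m hm hne
  rw [← listRel_iff] at h1 h2
  exact h2 (e ▸ h1)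

theorem ncard_dom {X : List ℕ} {L : List (List ℕ)} (h : chkD X L) :
    (dom L).ncard = L.toFinset.card := by
  unfold dom
  rw [Set.ncard_image_of_injOn (inj_of h), ← Set.ncard_coe_finset]
  congr 1
  ext l
  simp

theorem not_max {X : List ℕ} {L : List (List ℕ)} (l : List ℕ) (h1 : chkC X (l :: L))
    (h2 : chkD X (l :: L)) (h3 : l ∉ L) : ¬ IsMaximalCondorcetDomain (sx X) (dom L) := by
  intro hm
  have e := hm.2 (dom (l :: L)) (Set.image_mono (fun m hm => List.mem_cons_of_mem _ hm))
    (condorcet_dom h1)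
  have : listRel l ∈ dom L := e ▸ ⟨l, by simp, rfl⟩
  obtain ⟨m, hm', e'⟩ := this
  have := inj_of h2 (List.mem_cons_of_mem _ hm') (by simp) e'
  exact h3 (this ▸ hm')

def L0 : List (List ℕ) := [[1,2,3,4,5,6], [3,6,2,5,1,4], [4,1,5,2,6,3], [6,5,4,3,2,1]]
def X0 : List ℕ := [1,2,3,4,5,6]

theorem dom_eq : ({listRel [1,2,3,4,5,6], listRel [3,6,2,5,1,4],
        listRel [4,1,5,2,6,3], listRel [6,5,4,3,2,1]} : Set (ℕ → ℕ → Prop)) = dom L0 := by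
  ext r
  simp [dom, L0, eq_comm]

theorem sx0 : (Set.Icc 1 6 : Set ℕ) = sx X0 := by
  ext x
  simp [sx, X0]
  omega

theorem eq_of_le {X : Set ℕ} {p r : ℕ → ℕ → Prop} (hp : IsLinearOrderOn X p)
    (hr : IsLinearOrderOn X r) (h : ∀ a ∈ X, ∀ b ∈ X, p a b → r a b) : r = p := by
  funext a b
  refine propext ⟨fun hab => ?_, fun hab => h a (hp.1 a b hab).1 b (hp.1 a b hab).2 hab⟩
  obtain ⟨ha, hb⟩ := hr.1 a b hab
  by_contra hn
  have hne : a ≠ b := by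
    rintro rfl
    exact hr.2.1 a ha hab
  rcases hp.2.2.2 a ha b hb hne with h' | h'
  · exact hn h'
  · exact hr.2.1 a ha (hr.2.2.1 a ha b hb a ha hab (h b hb a ha h'))

def F0 : List (ℕ × ℕ × ℕ) := [(1, 4, 2), (1, 4, 3), (1, 5, 4), (1, 6, 4), (2, 1, 5), (2, 4, 1), (2, 4, 3), (2, 5, 3), (2, 6, 4), (2, 6, 5), (3, 1, 5), (3, 1, 6), (3, 2, 6), (3, 4, 1), (3, 4, 2), (3, 5, 2), (4, 2, 5), (4, 3, 5), (4, 3, 6), (4, 5, 1), (4, 6, 1), (4, 6, 2), (5, 1, 2), (5, 1, 3), (5, 2, 4), (5, 3, 4), (5, 3, 6), (5, 6, 2), (6, 1, 3), (6, 2, 3), (6, 3, 4), (6, 3, 5)]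

theorem F0_ok : ∀ t ∈ F0, t.1 ∈ X0 ∧ t.2.1 ∈ X0 ∧ t.2.2 ∈ X0 ∧ ∃ p ∈ L0, ∃ q ∈ L0,
    bef p t.2.1 t.2.2 = true ∧ bef p t.2.2 t.1 = true ∧ bef q t.2.2 t.1 = true ∧
      bef q t.1 t.2.1 = true := by decide +kernel

theorem combi {r : ℕ → ℕ → Prop} (hr : IsLinearOrderOn (sx X0) r)
    (hF : ∀ t ∈ F0, ¬ (r t.1 t.2.1 ∧ r t.2.1 t.2.2)) :
    ∃ l ∈ L0, ∀ a ∈ X0, ∀ b ∈ X0, bef l a b = true → r a b := by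
  obtain ⟨_, hi, ht, hto⟩ := hr
  have m1 : 1 ∈ sx X0 := by simp [sx, X0]
  have m2 : 2 ∈ sx X0 := by simp [sx, X0]
  have m3 : 3 ∈ sx X0 := by simp [sx, X0]
  have m4 : 4 ∈ sx X0 := by simp [sx, X0]
  have m5 : 5 ∈ sx X0 := by simp [sx, X0]
  have m6 : 6 ∈ sx X0 := by simp [sx, X0]
  have chain : (r 1 2 ∧ r 2 3 ∧ r 3 4 ∧ r 4 5 ∧ r 5 6) ∨ (r 3 6 ∧ r 6 2 ∧ r 2 5 ∧ r 5 1 ∧ r 1 4) ∨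
      (r 4 1 ∧ r 1 5 ∧ r 5 2 ∧ r 2 6 ∧ r 6 3) ∨ (r 6 5 ∧ r 5 4 ∧ r 4 3 ∧ r 3 2 ∧ r 2 1) := by
    have t12 := hto 1 m1 2 m2 (by decide)
    have t13 := hto 1 m1 3 m3 (by decide)
    have t14 := hto 1 m1 4 m4 (by decide)
    have t15 := hto 1 m1 5 m5 (by decide)
    have t16 := hto 1 m1 6 m6 (by decide)
    have t23 := hto 2 m2 3 m3 (by decide)
    have t24 := hto 2 m2 4 m4 (by decide)
    have t25 := hto 2 m2 5 m5 (by decide)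
    have t26 := hto 2 m2 6 m6 (by decide)
    have t34 := hto 3 m3 4 m4 (by decide)
    have t35 := hto 3 m3 5 m5 (by decide)
    have t36 := hto 3 m3 6 m6 (by decide)
    have t45 := hto 4 m4 5 m5 (by decide)
    have t46 := hto 4 m4 6 m6 (by decide)
    have t56 := hto 5 m5 6 m6 (by decide)
    simp only [F0, List.forall_mem_cons] at hF
    clear hto
    have i1 := hi 1 m1
    have i2 := hi 2 m2
    have i3 := hi 3 m3
    have i4 := hi 4 m4
    have i5 := hi 5 m5
    have i6 := hi 6 m6
    have ht' : ∀ a b c, a ∈ sx X0 → b ∈ sx X0 → c ∈ sx X0 → r a b → r b c → r a c :=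
      fun a b c ha hb hc => ht a ha b hb c hc
    grind (splits := 40)
  have tr : ∀ l ∈ L0, l.IsChain r → ∀ a ∈ X0, ∀ b ∈ X0, bef l a b = true → r a b := by
    intro l hl hc a ha b hb hab
    simp only [L0, List.mem_cons, List.not_mem_nil, or_false] at hl
    have ht' : ∀ a b c, a ∈ sx X0 → b ∈ sx X0 → c ∈ sx X0 → r a b → r b c → r a c :=
      fun a b c ha hb hc => ht a ha b hb c hc
    simp only [X0, List.mem_cons, List.not_mem_nil, or_false] at ha hb
    rcases hl with rfl | rfl | rfl | rfl <;> simp only [List.isChain_cons_cons] at hc <;>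
    rcases ha with rfl | rfl | rfl | rfl | rfl | rfl <;>
    rcases hb with rfl | rfl | rfl | rfl | rfl | rfl <;>
    first
    | exact absurd hab (by decide)
    | (clear hab hF chain hto hi; grind)
  rcases chain with h | h | h | h
  · exact ⟨[1,2,3,4,5,6], by decide, tr _ (by decide) (by simpa using h)⟩
  · exact ⟨[3,6,2,5,1,4], by decide, tr _ (by decide) (by simpa using h)⟩
  · exact ⟨[4,1,5,2,6,3], by decide, tr _ (by decide) (by simpa using h)⟩
  · exact ⟨[6,5,4,3,2,1], by decide, tr _ (by decide) (by simpa using h)⟩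

theorem max0 : IsMaximalCondorcetDomain (sx X0) (dom L0) := by
  refine ⟨condorcet_dom (by decide +kernel), ?_⟩
  intro D' hsub hD'
  refine Set.Subset.antisymm (fun r hr => ?_) hsub
  have hlin := hD'.1 r hr
  obtain ⟨l, hl, h⟩ := combi hlin (by
    rintro ⟨c, a, b⟩ ht ⟨h1, h2⟩
    obtain ⟨hc, ha, hb, p, hp, q, hq, p1, p2, q1, q2⟩ := F0_ok _ ht
    rw [← listRel_iff] at p1 p2 q1 q2
    exact not_cyc hD' ha hb hc (hsub ⟨p, hp, rfl⟩) (hsub ⟨q, hq, rfl⟩) hr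
      ⟨p1, p2, q1, q2, h1, h2⟩)
  refine ⟨l, hl, (eq_of_le (lin_of ?_) hlin ?_).symm⟩
  · exact (by decide +kernel : ∀ l ∈ L0, chkLin X0 l) l hl
  · intro a ha b hb hab
    exact h a ha b hb ((listRel_iff _ _ _).1 hab)

theorem five {A : Set ℕ} (hA : A ⊆ sx X0) (h5 : A.ncard = 5) :
    ∃ x ∈ X0, A = sx (X0.erase x) := by
  have hfin : (sx X0).Finite := sx0 ▸ Set.finite_Icc 1 6
  have h6 : (sx X0).ncard = 6 := by
    rw [← sx0, ← Finset.coe_Icc, Set.ncard_coe_finset]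
    rfl
  have hd := Set.ncard_sdiff_add_ncard_of_subset hA hfin
  obtain ⟨x, hx⟩ := Set.ncard_eq_one.1 (show (sx X0 \ A).ncard = 1 by omega)
  have hx' : x ∈ sx X0 \ A := hx ▸ rfl
  refine ⟨x, hx'.1, ?_⟩
  ext y
  have hy := Set.ext_iff.1 hx y
  have hAy := @hA y
  simp only [Set.mem_sdiff, Set.mem_singleton_iff, sx, Set.mem_setOf_eq] at *
  rw [List.Nodup.mem_erase_iff (by decide)]
  grind

theorem five_ok : ∀ x ∈ X0,
    (restrictDom (sx (X0.erase x)) (dom L0)).ncard = 4 ∧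
    ¬ IsMaximalCondorcetDomain (sx (X0.erase x)) (restrictDom (sx (X0.erase x)) (dom L0)) := by
  intro x hx
  rw [restrict_dom]
  set E : ℕ → List (List ℕ) := fun x =>
    L0.map (fun l => l.filter (fun y => (X0.erase x).contains y)) with hE
  change (dom (E x)).ncard = 4 ∧ ¬ IsMaximalCondorcetDomain (sx (X0.erase x)) (dom (E x))
  have key : ∀ x ∈ X0, ∃ l ∈ [[2, 3, 5, 4, 6], [1, 3, 4, 6, 5], [2, 5, 1, 4, 6],
      [1, 3, 6, 2, 5], [2, 1, 3, 4, 6], [1, 3, 2, 4, 5]],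
      chkC (X0.erase x) (l :: E x) ∧ chkD (X0.erase x) (l :: E x) ∧ l ∉ E x ∧
      chkD (X0.erase x) (E x) ∧ (E x).toFinset.card = 4 := by
    decide +kernel
  obtain ⟨l, _, h1, h2, h3, h4, h5⟩ := key x hx
  exact ⟨(ncard_dom h4).trans h5, not_max l h1 h2 h3⟩

/-- The domain `{123456, 362514, 415263, 654321}` is a maximal Condorcet domain on
`{1,…,6}` whose restriction to every 5-element subset consists of exactly 4 orders
and is not a maximal Condorcet domain there; i.e. it is discordant. -/
theorem smallest_discordant_domain :
    IsMaximalCondorcetDomain (Set.Icc 1 6)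
      ({listRel [1,2,3,4,5,6], listRel [3,6,2,5,1,4],
        listRel [4,1,5,2,6,3], listRel [6,5,4,3,2,1]} : Set (ℕ → ℕ → Prop)) ∧
    ∀ A : Set ℕ, A ⊆ Set.Icc 1 6 → A.ncard = 5 →
      (restrictDom A
          {listRel [1,2,3,4,5,6], listRel [3,6,2,5,1,4],
           listRel [4,1,5,2,6,3], listRel [6,5,4,3,2,1]}).ncard = 4 ∧
      ¬ IsMaximalCondorcetDomain A
          (restrictDom A
            {listRel [1,2,3,4,5,6], listRel [3,6,2,5,1,4],
             listRel [4,1,5,2,6,3], listRel [6,5,4,3,2,1]}) := by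
  rw [dom_eq, sx0]
  refine ⟨max0, ?_⟩
  intro A hA h5
  obtain ⟨x, hx, rfl⟩ := five hA h5
  exact five_ok x hx
end
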